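/- Let λ and μ be gl_n-highest weights (with arbitrary complex entries). Suppose that for each pair of indices 1 ≤ i < j ≤ n one has: either (m_j ∉ ⟨l_j, l_i⟩ and m_i ∉ ⟨l_j, l_i⟩) or (l_j ∉ ⟨m_j, m_i⟩ and l_i ∉ ⟨m_j, m_i⟩). Then the Y(gl_n)-module L(λ)⊗L(μ) is irreducible. -/

import Mathlib

open scoped TensorProduct

/-- An `n`-tuple of complex numbers is a `gl_n`-highest weight if the consecutive
differences `λ_i - λ_{i+1}` are non-negative integers. -/
def IsGLHighestWeight (n : ℕ) (lam : Fin n → ℂ) : Prop :=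
  ∀ i : Fin n, ∀ h : (i : ℕ) + 1 < n, ∃ N : ℕ, lam i - lam ⟨(i : ℕ) + 1, h⟩ = N

/-- A realization of the irreducible finite-dimensional `gl_n`-module `L(λ)`
with highest weight `lam`, given by the action of the matrix units `E i j`. -/
structure GLRep (n : ℕ) (lam : Fin n → ℂ) where
  V : Type
  [instAddCommGroup : AddCommGroup V]
  [instModule : Module ℂ V]
  [instFiniteDimensional : FiniteDimensional ℂ V]
  E : Fin n → Fin n → (V →ₗ[ℂ] V)
  commRel : ∀ i j k l : Fin n,
    E i j ∘ₗ E k l - E k l ∘ₗ E i j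
      = (if j = k then E i l else 0) - (if l = i then E k j else 0)
  hv : V
  hv_ne : hv ≠ 0
  hv_upper : ∀ i j : Fin n, i < j → E i j hv = 0
  hv_diag : ∀ i : Fin n, E i i hv = lam i • hv
  irreducible : ∀ U : Submodule ℂ V,
    (∀ i j : Fin n, ∀ v ∈ U, E i j v ∈ U) → U = ⊥ ∨ U = ⊤

attribute [instance] GLRep.instAddCommGroup GLRep.instModule GLRep.instFiniteDimensional

/-- The action of the Yangian generator `t_{ij}^{(1)}` on `L(λ) ⊗ L(μ)`
(both evaluation modules evaluated at `0`). -/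
noncomputable def t1 {n : ℕ} {lam mu : Fin n → ℂ} (A : GLRep n lam) (B : GLRep n mu)
    (i j : Fin n) : A.V ⊗[ℂ] B.V →ₗ[ℂ] A.V ⊗[ℂ] B.V :=
  TensorProduct.map (A.E i j) LinearMap.id + TensorProduct.map LinearMap.id (B.E i j)

/-- The action of the Yangian generator `t_{ij}^{(2)}` on `L(λ) ⊗ L(μ)`. -/
noncomputable def t2 {n : ℕ} {lam mu : Fin n → ℂ} (A : GLRep n lam) (B : GLRep n mu)
    (i j : Fin n) : A.V ⊗[ℂ] B.V →ₗ[ℂ] A.V ⊗[ℂ] B.V :=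
  ∑ a : Fin n, TensorProduct.map (A.E i a) (B.E a j)

/-- Irreducibility of `L(λ) ⊗ L(μ)` as a module over the Yangian `Y(gl_n)`:
the only subspaces invariant under all the operators `t1` and `t2`
(the generators `t_{ij}^{(r)}` with `r ≥ 3` acting as zero) are `⊥` and `⊤`. -/
def YangianIrred2 {n : ℕ} {lam mu : Fin n → ℂ} (A : GLRep n lam) (B : GLRep n mu) : Prop :=
  ∀ U : Submodule ℂ (A.V ⊗[ℂ] B.V),
    (∀ i j : Fin n, ∀ v ∈ U, t1 A B i j v ∈ U) →
    (∀ i j : Fin n, ∀ v ∈ U, t2 A B i j v ∈ U) →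
    U = ⊥ ∨ U = ⊤

/-- The shifted weight `l_i = λ_i − i + 1` (with `0`-indexed entries:
`l i = lam i - i`). -/
def lshiftC (n : ℕ) (lam : Fin n → ℂ) : Fin n → ℂ :=
  fun i => lam i - ((i : ℕ) : ℂ)

/-- The set `⟨l_j, l_i⟩ = {l_j + t : t ∈ ℤ, 0 ≤ t ≤ l_i − l_j} \ {l_s : i ≤ s ≤ j}`
for a pair of indices `i < j`. -/
def bracketC (n : ℕ) (l : Fin n → ℂ) (i j : Fin n) : Set ℂ :=
  {x | (∃ t : ℕ, x = l j + (t : ℂ)) ∧ (∃ t : ℕ, l i = x + (t : ℂ)) ∧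
    ∀ s : Fin n, i ≤ s → s ≤ j → x ≠ l s}

/-- The condition `m_j, m_i ∉ ⟨l_j, l_i⟩ or l_j, l_i ∉ ⟨m_j, m_i⟩` for a pair
of indices `i < j`. -/
def SepCond (n : ℕ) (lam mu : Fin n → ℂ) (i j : Fin n) : Prop :=
  (lshiftC n mu j ∉ bracketC n (lshiftC n lam) i j ∧
      lshiftC n mu i ∉ bracketC n (lshiftC n lam) i j) ∨
  (lshiftC n lam j ∉ bracketC n (lshiftC n mu) i j ∧
      lshiftC n lam i ∉ bracketC n (lshiftC n mu) i j)

/-!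
Write `E` and `F` for the actions of `gl_n` on the two tensor factors, and let `w` be the tensor
product of the highest vectors. The proof is by induction on `n`. Given a nonzero submodule `U`,
take a vector in the lowest eigenspace of `E_{nn} + F_{nn}` on `U`, for the eigenvalue `c`. As
`t^{(1)}_{in}` and `t^{(2)}_{in}` kill it for `i < n`, its components `v` above the lowest
eigenvalue of `E_{nn}` satisfy `(E² - c E)_{in} v = 0`. The topmost component has the lowest
eigenvalue `μ_n` of `F_{nn}`, and if it were not also the bottom one, the first alternative of the
separation condition for the pair `(1, n)` would fail. Hence `U` meets the product of the lowest
layers of `E` and `F`, which is a bimodule over `gl_{n-1}`, and `w ∈ U` by induction. If `U` is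
proper, the same argument for the annihilator of `U`, with the action twisted by `E_{ij} ↦
-E_{n+1-j,n+1-i}`, puts into the annihilator a functional that does not vanish at `w`, which is
absurd. The twist also interchanges the two factors, and with them the two alternatives of the
separation condition.
-/

namespace EvalYangian

open Module Matrix

section TensorOperators

attribute [local instance] LieRing.ofAssociativeRing

variable {I A B : Type*} [DecidableEq I] [Ring A] [Ring B]

/-- `X` is a tensor operator for `D`: the entries of `D` act on those of `X` by commutators as
matrix units act on matrix units. -/
def IsGLTensor (D X : Matrix I I A) : Prop :=
  ∀ i j k l, ⁅D i j, X k l⁆ = (if j = k then X i l else 0) - (if l = i then X k j else 0)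

/-- The entries of `E` satisfy the commutation relations of the matrix units of `gl`. -/
abbrev IsGLAction (E : Matrix I I A) : Prop :=
  IsGLTensor E E

namespace IsGLTensor

variable {D D' X Y : Matrix I I A}

theorem add_right (hX : IsGLTensor D X) (hY : IsGLTensor D Y) : IsGLTensor D (X + Y) := by
  intro i j k l
  simp only [Matrix.add_apply, lie_add, hX i j k l, hY i j k l]
  split_ifs <;> abel

theorem add_left (hX : IsGLTensor D X) (h : ∀ i j k l, Commute (D' i j) (X k l)) :
    IsGLTensor (D + D') X := by
  intro i j k l
  rw [Matrix.add_apply, add_lie, hX i j k l, (h i j k l).lie_eq, add_zero]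

theorem smul_right {R : Type*} [CommRing R] [Algebra R A] (hX : IsGLTensor D X) (c : R) :
    IsGLTensor D (c • X) := by
  intro i j k l
  rw [Matrix.smul_apply, Ring.lie_def, mul_smul_comm, smul_mul_assoc, ← smul_sub, ← Ring.lie_def,
    hX i j k l]
  split_ifs <;> simp [smul_sub]

theorem mul [Fintype I] (hX : IsGLTensor D X) (hY : IsGLTensor D Y) : IsGLTensor D (X * Y) := by
  intro i j k l
  have leibniz (a b c : A) : ⁅a, b * c⁆ = ⁅a, b⁆ * c + b * ⁅a, c⁆ := by
    simp only [Ring.lie_def]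
    noncomm_ring
  simp only [Matrix.mul_apply, lie_sum, leibniz, hX i j, hY i j, sub_mul, mul_sub, ite_mul, mul_ite,
    zero_mul, mul_zero, Finset.sum_add_distrib, Finset.sum_sub_distrib, Finset.sum_ite_eq,
    Finset.sum_ite_eq', Finset.sum_ite_irrel, Finset.sum_const_zero, Finset.mem_univ, if_true]
  abel

theorem map (hX : IsGLTensor D X) (f : A →+* B) : IsGLTensor (D.map f) (X.map f) := by
  intro i j k l
  have h := congrArg f (hX i j k l)
  simp only [Ring.lie_def, map_sub, map_mul, apply_ite f, map_zero] at h
  simpa only [Ring.lie_def, Matrix.map_apply] using h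

theorem submatrix {J : Type*} [DecidableEq J] (hX : IsGLTensor D X) {e : J → I}
    (he : Function.Injective e) : IsGLTensor (D.submatrix e e) (X.submatrix e e) := by
  intro i j k l
  simpa only [submatrix_apply, he.eq_iff] using hX (e i) (e j) (e k) (e l)

theorem neg_transpose (hX : IsGLTensor D X) : IsGLTensor (-Dᵀ) (-Xᵀ) := by
  intro i j k l
  simp only [Matrix.neg_apply, transpose_apply, neg_lie, lie_neg, hX j i l k]
  split_ifs <;> simp_all [neg_add_eq_sub]

end IsGLTensor

end TensorOperators

section Stability

variable {K W : Type*} [Field K] [AddCommGroup W] [Module K W]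

/-- `N` is stable under every operator of `S`. -/
def IsStable (S : Set (End K W)) (N : Submodule K W) : Prop :=
  ∀ f ∈ S, N ∈ f.invtSubmodule

/-- `P` is stable under `S` and has no proper nonzero subspace stable under `S`. Unlike a simple
module, `P` is allowed to be zero. -/
structure IsSimpleUnder (S : Set (End K W)) (P : Submodule K W) : Prop where
  isStable : IsStable S P
  eq_bot_or_eq : ∀ N ≤ P, IsStable S N → N = ⊥ ∨ N = P

/-- The set of entries of a matrix, mostly a matrix of operators. -/
def entries {I J A : Type*} (E : Matrix I J A) : Set A :=
  {f | ∃ i j, E i j = f}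

variable {S T : Set (End K W)} {N P : Submodule K W}

theorem IsStable.mono (hST : S ⊆ T) (hN : IsStable T N) : IsStable S N :=
  fun f hf => hN f (hST hf)

theorem isStable_top (S : Set (End K W)) : IsStable S ⊤ :=
  fun _ _ => End.invtSubmodule.top_mem _

theorem isStable_union : IsStable (S ∪ T) N ↔ IsStable S N ∧ IsStable T N := by
  simp only [IsStable, Set.mem_union, or_imp, forall_and]

theorem isStable_entries {I J : Type*} {E : Matrix I J (End K W)} :
    IsStable (entries E) N ↔ ∀ i j, N ∈ (E i j).invtSubmodule := by
  constructor
  · exact fun h i j => h _ ⟨i, j, rfl⟩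
  · rintro h _ ⟨i, j, rfl⟩
    exact h i j

theorem IsStable.inf (hN : IsStable S N) (hP : IsStable S P) : IsStable S (N ⊓ P) :=
  fun f hf => Sublattice.inf_mem (hN f hf) (hP f hf)

theorem IsStable.iSup {ι : Sort*} {N : ι → Submodule K W} (h : ∀ i, IsStable S (N i)) :
    IsStable S (⨆ i, N i) :=
  fun f hf => iSup_le fun i => (h i f hf).trans (Submodule.comap_mono (le_iSup N i))

theorem isStable_eigenspace {h : End K W} (hS : ∀ f ∈ S, Commute h f) (a : K) :
    IsStable S (End.eigenspace h a) :=
  fun f hf => End.mapsTo_genEigenspace_of_comm (hS f hf) a 1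

theorem IsSimpleUnder.eq_top_of_mem (hS : IsSimpleUnder S ⊤) (hN : IsStable S N) {x : W}
    (hx : x ∈ N) (hx0 : x ≠ 0) : N = ⊤ :=
  (hS.eq_bot_or_eq N le_top hN).resolve_left ((Submodule.ne_bot_iff N).2 ⟨x, hx, hx0⟩)

theorem IsSimpleUnder.span_singleton_eq (hP : IsSimpleUnder (∅ : Set (End K W)) P) {x : W}
    (hx : x ∈ P) (hx0 : x ≠ 0) : K ∙ x = P :=
  (hP.eq_bot_or_eq _ ((Submodule.span_singleton_le_iff_mem x P).2 hx)
    (fun _ hf => hf.elim)).resolve_left (by simpa using hx0)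

theorem eq_zero_of_sum_eigenvectors_eq_zero {ι : Type*} {h : End K W} {μ : ι → K}
    (hμ : Function.Injective μ) {s : Finset ι} {v : ι → W} (hv : ∀ i, h (v i) = μ i • v i)
    (hs : ∑ i ∈ s, v i = 0) : ∀ i ∈ s, v i = 0 :=
  (iSupIndep_iff_finsetSum_eq_zero_imp_eq_zero _).1 ((End.eigenspaces_iSupIndep h).comp hμ) s v
    (fun i _ => End.mem_eigenspace_iff.2 (hv i)) hs

theorem exists_eq_and_mem_of_mem_iSup_eigenspace {ι : Type*} {h : End K W} {μ : ι → K}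
    (hμ : Function.Injective μ) {N : ι → Submodule K W} (hN : ∀ i, N i ≤ End.eigenspace h (μ i))
    {x : W} (hx : x ∈ ⨆ i, N i) (hx0 : x ≠ 0) {a : K} (ha : h x = a • x) :
    ∃ i, a = μ i ∧ x ∈ N i := by
  obtain ⟨v, hv, rfl⟩ := (Submodule.mem_iSup_iff_exists_finsupp _ _).1 hx
  have hvμ i : h (v i) = μ i • v i := End.mem_eigenspace_iff.1 (hN i (hv i))
  have hzero : ∀ i ∈ v.support, (μ i - a) • v i = 0 := by
    refine eq_zero_of_sum_eigenvectors_eq_zero (h := h) hμ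
      (fun i => by rw [map_smul, hvμ, smul_comm]) ?_
    simpa [Finsupp.sum, hvμ, Finset.smul_sum, sub_smul, sub_eq_zero] using ha
  have hμa i (hi : v i ≠ 0) : μ i = a :=
    sub_eq_zero.1 ((smul_eq_zero.1 (hzero i (Finsupp.mem_support_iff.2 hi))).resolve_right hi)
  obtain ⟨i, hi⟩ : ∃ i, v i ≠ 0 := by
    by_contra! h0
    exact hx0 (by simp [Finsupp.sum, h0])
  refine ⟨i, (hμa i hi).symm, ?_⟩
  have hvi : v.sum (fun _ w => w) = v i := by
    refine Finset.sum_eq_single i (fun j _ hji => ?_) fun hi' => Finsupp.notMem_support_iff.1 hi'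
    by_contra hj
    exact hji (hμ ((hμa j hj).trans (hμa i hi).symm))
  exact hvi ▸ hv i

end Stability

section BottomLayer

variable {K W : Type*} [Field K] [AddCommGroup W] [Module K W] {n : ℕ}

theorem IsGLTensor.apply_apply {I : Type*} [DecidableEq I] {D X : Matrix I I (End K W)}
    (hX : IsGLTensor D X) (i j k l : I) (x : W) :
    D i j (X k l x) =
      X k l (D i j x) + ((if j = k then X i l x else 0) - (if l = i then X k j x else 0)) := by
  have h := congrArg (fun f : End K W => f x) (hX i j k l)
  simp only [Ring.lie_def, LinearMap.sub_apply, End.mul_apply, apply_ite (fun f : End K W => f x),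
    LinearMap.zero_apply] at h
  rw [← h, add_sub_cancel]

/-- The restriction of an action of `gl_{n+1}` to `gl_n`. -/
def dropLast {A : Type*} (E : Matrix (Fin (n + 1)) (Fin (n + 1)) A) : Matrix (Fin n) (Fin n) A :=
  E.submatrix Fin.castSucc Fin.castSucc

theorem dropLast_apply {A : Type*} (E : Matrix (Fin (n + 1)) (Fin (n + 1)) A) (i j : Fin n) :
    dropLast E i j = E i.castSucc j.castSucc :=
  rfl

theorem IsGLTensor.dropLast {A : Type*} [Ring A] {D X : Matrix (Fin (n + 1)) (Fin (n + 1)) A}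
    (hX : IsGLTensor D X) : IsGLTensor (dropLast D) (dropLast X) :=
  hX.submatrix (Fin.castSucc_injective n)

theorem entries_dropLast_subset {A : Type*} (E : Matrix (Fin (n + 1)) (Fin (n + 1)) A) :
    entries (dropLast E) ⊆ entries E := by
  rintro _ ⟨i, j, rfl⟩
  exact ⟨_, _, rfl⟩

/-- The common kernel of the operators `X_{in}`, `i < n`. -/
def lastColumnKer (X : Matrix (Fin (n + 1)) (Fin (n + 1)) (End K W)) : Submodule K W :=
  ⨅ i : Fin n, LinearMap.ker (X i.castSucc (Fin.last n))

theorem mem_lastColumnKer {X : Matrix (Fin (n + 1)) (Fin (n + 1)) (End K W)} {x : W} :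
    x ∈ lastColumnKer X ↔ ∀ i : Fin n, X i.castSucc (Fin.last n) x = 0 := by
  simp [lastColumnKer]

theorem isStable_lastColumnKer {E X : Matrix (Fin (n + 1)) (Fin (n + 1)) (End K W)}
    (hX : IsGLTensor E X) : IsStable (entries (dropLast E)) (lastColumnKer X) := by
  refine isStable_entries.2 fun i j x hx => mem_lastColumnKer.2 fun k => ?_
  have hx := mem_lastColumnKer.1 hx
  have hcomm := hX.apply_apply i.castSucc j.castSucc k.castSucc (Fin.last n) x
  simpa [dropLast, hx, (Fin.castSucc_lt_last _).ne', apply_ite (fun f : End K W => f x)] using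
    hcomm.symm

/-- The eigenspace of `E_{nn}` for `c` inside the common kernel of the operators `E_{in}`, `i < n`.
In a simple module it is nonzero for at most one `c`, the lowest eigenvalue of `E_{nn}`. -/
def bottomLayer (E : Matrix (Fin (n + 1)) (Fin (n + 1)) (End K W)) (c : K) : Submodule K W :=
  End.eigenspace (E (Fin.last n) (Fin.last n)) c ⊓ lastColumnKer E

variable {E : Matrix (Fin (n + 1)) (Fin (n + 1)) (End K W)} {G : Set (End K W)}
  {N P Q : Submodule K W} {a c : K} {x : W}

theorem mem_bottomLayer :
    x ∈ bottomLayer E c ↔ E (Fin.last n) (Fin.last n) x = c • x ∧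
      ∀ i : Fin n, E i.castSucc (Fin.last n) x = 0 := by
  simp [bottomLayer, mem_lastColumnKer]

/-- The subspaces obtained from `N` by applying the lowering operators `E_{ni}`, `i < n`. -/
def tower (E : Matrix (Fin (n + 1)) (Fin (n + 1)) (End K W)) (N : Submodule K W) :
    ℕ → Submodule K W
  | 0 => N
  | k + 1 => ⨆ i : Fin n, (tower E N k).map (E (Fin.last n) i.castSucc)

theorem lower_mem_tower_succ {k : ℕ} (hx : x ∈ tower E N k) (i : Fin n) :
    E (Fin.last n) i.castSucc x ∈ tower E N (k + 1) :=
  Submodule.mem_iSup_of_mem i (Submodule.mem_map_of_mem hx)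

theorem tower_succ_le {k : ℕ} :
    tower E N (k + 1) ≤ Q ↔ ∀ i : Fin n, ∀ x ∈ tower E N k, E (Fin.last n) i.castSucc x ∈ Q := by
  simp only [tower, iSup_le_iff, Submodule.map_le_iff_le_comap]
  rfl

theorem tower_le_eigenspace (hE : IsGLAction E) (hN : N ≤ bottomLayer E c) (k : ℕ) :
    tower E N k ≤ End.eigenspace (E (Fin.last n) (Fin.last n)) (c + k) := by
  induction k with
  | zero => simpa [tower] using hN.trans inf_le_left
  | succ k ih =>
    refine tower_succ_le.2 fun i x hx => End.mem_eigenspace_iff.2 ?_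
    rw [hE.apply_apply, End.mem_eigenspace_iff.1 (ih hx)]
    simp [(Fin.castSucc_lt_last i).ne]
    module

theorem isStable_tower (hE : IsGLAction E) (hG : ∀ g ∈ G, ∀ i j, Commute g (E i j))
    (hN : IsStable (entries (dropLast E) ∪ G) N) (k : ℕ) :
    IsStable (entries (dropLast E) ∪ G) (tower E N k) := by
  induction k with
  | zero => exact hN
  | succ k ih =>
    obtain ⟨ihE, ihG⟩ := isStable_union.1 ih
    refine isStable_union.2 ⟨isStable_entries.2 fun i j => ?_, fun g hg => ?_⟩
    · refine tower_succ_le.2 fun a x hx => ?_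
      have hijx := lower_mem_tower_succ (isStable_entries.1 ihE i j hx) a
      simp only [dropLast, submatrix_apply] at hijx
      simp only [dropLast, submatrix_apply, Submodule.mem_comap, hE.apply_apply i.castSucc,
        (Fin.castSucc_lt_last j).ne, if_false, zero_sub]
      refine add_mem hijx (neg_mem ?_)
      split_ifs
      exacts [lower_mem_tower_succ hx j, zero_mem _]
    · refine tower_succ_le.2 fun a x hx => ?_
      have hcomm := LinearMap.congr_fun (hG g hg (Fin.last n) a.castSucc).eq x
      exact Submodule.mem_comap.2 (hcomm ▸ lower_mem_tower_succ (ihG g hg hx) a)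

theorem tower_succ_le_comap_raise (hE : IsGLAction E) (hN : N ≤ bottomLayer E c)
    (hNE : IsStable (entries (dropLast E)) N) (i : Fin n) (k : ℕ) :
    tower E N (k + 1) ≤ (tower E N k).comap (E i.castSucc (Fin.last n)) := by
  have hstable (k : ℕ) (x) (hx : x ∈ tower E N k) (a : Fin n) :
      E i.castSucc a.castSucc x -
        (if a.castSucc = i.castSucc then E (Fin.last n) (Fin.last n) x else 0) ∈
          tower E N k := by
    have := isStable_tower (G := ∅) hE (by simp) (by simpa using hNE) k
    rw [End.mem_eigenspace_iff.1 (tower_le_eigenspace hE hN k hx)]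
    refine sub_mem (isStable_entries.1 (isStable_union.1 this).1 i a hx) ?_
    split_ifs
    exacts [Submodule.smul_mem _ _ hx, zero_mem _]
  induction k with
  | zero =>
    refine tower_succ_le.2 fun a x hx => ?_
    rw [Submodule.mem_comap, hE.apply_apply, (mem_bottomLayer.1 (hN hx)).2, map_zero, zero_add]
    simpa using hstable 0 x hx a
  | succ k ih =>
    refine tower_succ_le.2 fun a x hx => ?_
    rw [Submodule.mem_comap, hE.apply_apply]
    simpa using add_mem (lower_mem_tower_succ (ih hx) a) (hstable (k + 1) x hx a)

theorem isStable_iSup_tower (hE : IsGLAction E) (hG : ∀ g ∈ G, ∀ i j, Commute g (E i j))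
    (hN : N ≤ bottomLayer E c) (hNs : IsStable (entries (dropLast E) ∪ G) N) :
    IsStable (entries E ∪ G) (⨆ k, tower E N k) := by
  have hs := isStable_tower hE hG hNs
  refine isStable_union.2 ⟨isStable_entries.2 fun i j => ?_,
    IsStable.iSup fun k => (isStable_union.1 (hs k)).2⟩
  rw [End.mem_invtSubmodule]
  refine iSup_le fun k x hx => ?_
  have mem (k) {y : W} (hy : y ∈ tower E N k) : y ∈ ⨆ k, tower E N k :=
    Submodule.mem_iSup_of_mem k hy
  rw [Submodule.mem_comap]
  cases i using Fin.lastCases with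
  | last =>
    cases j using Fin.lastCases with
    | last =>
      rw [End.mem_eigenspace_iff.1 (tower_le_eigenspace hE hN k hx)]
      exact Submodule.smul_mem _ _ (mem k hx)
    | cast j => exact mem (k + 1) (lower_mem_tower_succ hx j)
  | cast i =>
    cases j using Fin.lastCases with
    | last =>
      cases k with
      | zero => simp [(mem_bottomLayer.1 (hN hx)).2 i]
      | succ k => exact mem k (tower_succ_le_comap_raise hE hN (isStable_union.1 hNs).1 i k hx)
    | cast j => exact mem k (isStable_entries.1 (isStable_union.1 (hs k)).1 i j hx)

theorem commute_last_dropLast (hE : IsGLAction E) (i j : Fin n) :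
    Commute (E (Fin.last n) (Fin.last n)) (dropLast E i j) := by
  ext x
  simp [dropLast, hE.apply_apply (Fin.last n), (Fin.castSucc_lt_last _).ne,
    (Fin.castSucc_lt_last _).ne']

theorem isStable_bottomLayer (hE : IsGLAction E) (hG : ∀ g ∈ G, ∀ i j, Commute g (E i j)) (c : K) :
    IsStable (entries (dropLast E) ∪ G) (bottomLayer E c) := by
  refine isStable_union.2 ⟨?_, fun g hg x hx => ?_⟩
  · refine (isStable_eigenspace ?_ c).inf (isStable_lastColumnKer hE)
    rintro _ ⟨i, j, rfl⟩
    exact commute_last_dropLast hE i j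
  · obtain ⟨hxc, hx0⟩ := mem_bottomLayer.1 hx
    have hgx i j : E i j (g x) = g (E i j x) := (LinearMap.congr_fun (hG g hg i j).eq x).symm
    exact mem_bottomLayer.2 ⟨by rw [hgx, hxc, map_smul], fun i => by rw [hgx, hx0, map_zero]⟩

/-- `P` is a simple module for the action `E` of `gl_n` together with a set `G` of operators
commuting with it. -/
structure IsSimpleGLModule {n : ℕ} (E : Matrix (Fin n) (Fin n) (End K W)) (G : Set (End K W))
    (P : Submodule K W) : Prop where
  isGLAction : IsGLAction E
  commute : ∀ g ∈ G, ∀ i j, Commute g (E i j)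
  isSimple : IsSimpleUnder (entries E ∪ G) P

namespace IsSimpleGLModule

theorem isStable_entries {n : ℕ} {E : Matrix (Fin n) (Fin n) (End K W)}
    (hP : IsSimpleGLModule E G P) : IsStable (entries E) P :=
  (isStable_union.1 hP.isSimple.isStable).1

theorem apply_mem {n : ℕ} {E : Matrix (Fin n) (Fin n) (End K W)} (hP : IsSimpleGLModule E G P)
    (i j : Fin n) (hx : x ∈ P) : E i j x ∈ P :=
  hP.isStable_entries _ ⟨i, j, rfl⟩ hx

theorem iSup_tower_eq (hP : IsSimpleGLModule E G P) (hNP : N ≤ P) (hN : N ≤ bottomLayer E c)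
    (hN0 : N ≠ ⊥) (hNs : IsStable (entries (dropLast E) ∪ G) N) : ⨆ k, tower E N k = P := by
  have hle : ⨆ k, tower E N k ≤ P := by
    refine iSup_le fun k => ?_
    induction k with
    | zero => exact hNP
    | succ k ih =>
      exact tower_succ_le.2 fun i x hx => hP.apply_mem _ _ (ih hx)
  refine (hP.isSimple.eq_bot_or_eq _ hle
    (isStable_iSup_tower hP.isGLAction hP.commute hN hNs)).resolve_left fun h => hN0 ?_
  exact eq_bot_mono (le_iSup (tower E N) 0) h

theorem isStable_inf_bottomLayer (hP : IsSimpleGLModule E G P) (c : K) :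
    IsStable (entries (dropLast E) ∪ G) (P ⊓ bottomLayer E c) :=
  (hP.isSimple.isStable.mono (Set.union_subset_union_left G (entries_dropLast_subset E))).inf
    (isStable_bottomLayer hP.isGLAction hP.commute c)

theorem le_of_lowering (hP : IsSimpleGLModule E G P) (hc : P ⊓ bottomLayer E c ≠ ⊥)
    (hQ : P ⊓ bottomLayer E c ≤ Q)
    (hlow : ∀ i : Fin n, ∀ x ∈ P, E (Fin.last n) i.castSucc x ∈ Q) : P ≤ Q := by
  have htower := hP.iSup_tower_eq inf_le_left inf_le_right hc (hP.isStable_inf_bottomLayer c)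
  refine htower.ge.trans (iSup_le fun k => ?_)
  cases k with
  | zero => exact hQ
  | succ k =>
    exact tower_succ_le.2 fun i x hx => hlow i x (htower.le (Submodule.mem_iSup_of_mem k hx))

variable [CharZero K]

theorem exists_mem_tower (hP : IsSimpleGLModule E G P) (hN : N ≤ P ⊓ bottomLayer E c)
    (hN0 : N ≠ ⊥) (hNs : IsStable (entries (dropLast E) ∪ G) N) (hx : x ∈ P) (hx0 : x ≠ 0)
    (ha : E (Fin.last n) (Fin.last n) x = a • x) : ∃ k : ℕ, a = c + k ∧ x ∈ tower E N k :=
  have hNb := hN.trans inf_le_right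
  exists_eq_and_mem_of_mem_iSup_eigenspace (fun k l hkl => by simpa using hkl)
    (tower_le_eigenspace hP.isGLAction hNb)
    ((hP.iSup_tower_eq (hN.trans inf_le_left) hNb hN0 hNs).ge hx) hx0 ha

theorem exists_eq_add_natCast (hP : IsSimpleGLModule E G P) (hc : P ⊓ bottomLayer E c ≠ ⊥)
    (hx : x ∈ P) (hx0 : x ≠ 0) (ha : E (Fin.last n) (Fin.last n) x = a • x) :
    ∃ k : ℕ, a = c + k :=
  (hP.exists_mem_tower le_rfl hc (hP.isStable_inf_bottomLayer c) hx hx0 ha).imp fun _ h => h.1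

theorem inf_eigenspace_le (hP : IsSimpleGLModule E G P) (hN : N ≤ P ⊓ bottomLayer E c)
    (hN0 : N ≠ ⊥) (hNs : IsStable (entries (dropLast E) ∪ G) N) :
    P ⊓ End.eigenspace (E (Fin.last n) (Fin.last n)) c ≤ N := by
  rintro x ⟨hx, hxc⟩
  obtain rfl | hx0 := eq_or_ne x 0
  · exact zero_mem N
  obtain ⟨k, hk, hxk⟩ := hP.exists_mem_tower hN hN0 hNs hx hx0 (End.mem_eigenspace_iff.1 hxc)
  obtain rfl : k = 0 := by simpa using hk
  exact hxk

theorem inf_bottomLayer (hP : IsSimpleGLModule E G P) (c : K) :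
    IsSimpleGLModule (dropLast E) G (P ⊓ bottomLayer E c) where
  isGLAction := hP.isGLAction.dropLast
  commute g hg _ _ := hP.commute g hg _ _
  isSimple.isStable := hP.isStable_inf_bottomLayer c
  isSimple.eq_bot_or_eq _ hN hNs := or_iff_not_imp_left.2 fun hN0 =>
    hN.antisymm ((inf_le_inf_left P inf_le_left).trans (hP.inf_eigenspace_le hN hN0 hNs))

theorem bottomLayer_unique (hP : IsSimpleGLModule E G P) {b c : K}
    (hb : P ⊓ bottomLayer E b ≠ ⊥) (hc : P ⊓ bottomLayer E c ≠ ⊥) : b = c := by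
  obtain ⟨x, ⟨hxP, hxb⟩, hx0⟩ := Submodule.exists_mem_ne_zero_of_ne_bot hb
  obtain ⟨y, ⟨hyP, hyc⟩, hy0⟩ := Submodule.exists_mem_ne_zero_of_ne_bot hc
  obtain ⟨k, hk⟩ := hP.exists_eq_add_natCast hc hxP hx0 (mem_bottomLayer.1 hxb).1
  obtain ⟨l, hl⟩ := hP.exists_eq_add_natCast hb hyP hy0 (mem_bottomLayer.1 hyc).1
  have hkl : ((k + l : ℕ) : K) = 0 := by push_cast; linear_combination -hk - hl
  obtain rfl : k = 0 := (Nat.add_eq_zero_iff.1 (Nat.cast_eq_zero.1 hkl)).1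
  simpa using hk

end IsSimpleGLModule

end BottomLayer

section HighestWeight

variable {K W : Type*} [Field K] [AddCommGroup W] [Module K W] {n : ℕ}

/-- The space of singular vectors of weight `r`. -/
def highestWeightSpace (E : Matrix (Fin n) (Fin n) (End K W)) (r : Fin n → K) : Submodule K W :=
  (⨅ i, ⨅ j, ⨅ _ : i < j, LinearMap.ker (E i j)) ⊓ ⨅ i, End.eigenspace (E i i) (r i)

theorem mem_highestWeightSpace {E : Matrix (Fin n) (Fin n) (End K W)} {r : Fin n → K} {x : W} :
    x ∈ highestWeightSpace E r ↔ (∀ i j, i < j → E i j x = 0) ∧ ∀ i, E i i x = r i • x := by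
  simp [highestWeightSpace]

theorem highestWeightSpace_zero (E : Matrix (Fin 0) (Fin 0) (End K W)) (r : Fin 0 → K) :
    highestWeightSpace E r = ⊤ := by
  simp [highestWeightSpace]

theorem highestWeightSpace_succ (E : Matrix (Fin (n + 1)) (Fin (n + 1)) (End K W))
    (r : Fin (n + 1) → K) :
    highestWeightSpace E r =
      bottomLayer E (r (Fin.last n)) ⊓ highestWeightSpace (dropLast E) (r ∘ Fin.castSucc) := by
  ext x
  simp only [Submodule.mem_inf, mem_highestWeightSpace, mem_bottomLayer, Fin.forall_fin_succ',
    dropLast, submatrix_apply, Fin.castSucc_lt_castSucc_iff, Fin.castSucc_lt_last,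
    Function.comp_apply, lt_irrefl, (Fin.castSucc_lt_last _).not_gt, false_imp_iff, forall_const,
    and_true, forall_and]
  tauto

theorem highestWeightSpace_le_bottomLayer {E : Matrix (Fin (n + 1)) (Fin (n + 1)) (End K W)}
    {r : Fin (n + 1) → K} : highestWeightSpace E r ≤ bottomLayer E (r (Fin.last n)) :=
  (highestWeightSpace_succ E r).trans_le inf_le_left

namespace IsSimpleGLModule

variable {n : ℕ} {E : Matrix (Fin n) (Fin n) (End K W)} {G : Set (End K W)} {P Q : Submodule K W}
  {r s : Fin n → K}

variable [CharZero K]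

theorem highestWeight_unique (hP : IsSimpleGLModule E G P)
    (hr : P ⊓ highestWeightSpace E r ≠ ⊥) (hs : P ⊓ highestWeightSpace E s ≠ ⊥) : r = s := by
  induction n generalizing P with
  | zero => exact Subsingleton.elim _ _
  | succ n ih =>
    rw [highestWeightSpace_succ, ← inf_assoc] at hr hs
    have hlast := hP.bottomLayer_unique (ne_bot_of_le_ne_bot hr inf_le_left)
      (ne_bot_of_le_ne_bot hs inf_le_left)
    rw [hlast] at hr
    funext i
    cases i using Fin.lastCases with
    | last => exact hlast
    | cast i => exact congrFun (ih (hP.inf_bottomLayer _) hr hs) i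

theorem inf_highestWeightSpace (hP : IsSimpleGLModule E G P) (r : Fin n → K) :
    IsSimpleUnder G (P ⊓ highestWeightSpace E r) := by
  induction n generalizing P with
  | zero =>
    have hempty : entries E = ∅ := Set.eq_empty_of_forall_notMem fun _ ⟨i, _⟩ => i.elim0
    simpa [highestWeightSpace_zero, hempty] using hP.isSimple
  | succ n ih =>
    rw [highestWeightSpace_succ, ← inf_assoc]
    exact ih (hP.inf_bottomLayer _) _

theorem le_of_forall_lowering (hP : IsSimpleGLModule E G P)
    (hr : P ⊓ highestWeightSpace E r ≠ ⊥) (hQ : P ⊓ highestWeightSpace E r ≤ Q)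
    (hlow : ∀ i j, j < i → ∀ x ∈ P, E i j x ∈ Q) : P ≤ Q := by
  induction n generalizing P with
  | zero => simpa [highestWeightSpace_zero] using hQ
  | succ n ih =>
    rw [highestWeightSpace_succ, ← inf_assoc] at hr hQ
    refine hP.le_of_lowering (ne_bot_of_le_ne_bot hr inf_le_left) ?_
      fun i => hlow _ _ (Fin.castSucc_lt_last i)
    exact ih (hP.inf_bottomLayer _) hr hQ fun i j hij x hx => hlow _ _ hij x hx.1

end IsSimpleGLModule

end HighestWeight

theorem IsGLTensor.inf_eigenspace_le_lastColumnKer {K W : Type*} [Field K] [AddCommGroup W]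
    [Module K W] {n : ℕ} {D X : Matrix (Fin (n + 1)) (Fin (n + 1)) (End K W)}
    (hX : IsGLTensor D X) {Z : Submodule K W} (hs : IsStable (entries X) Z) {c : K}
    (hc : Z ⊓ End.eigenspace (D (Fin.last n) (Fin.last n)) (c - 1) = ⊥) :
    Z ⊓ End.eigenspace (D (Fin.last n) (Fin.last n)) c ≤ lastColumnKer X := by
  rintro x ⟨hxZ, hx⟩
  rw [SetLike.mem_coe, End.mem_eigenspace_iff] at hx
  refine mem_lastColumnKer.2 fun i => (Submodule.mem_bot K).1 (hc.le ⟨?_, ?_⟩)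
  · exact isStable_entries.1 hs _ _ hxZ
  · rw [SetLike.mem_coe, End.mem_eigenspace_iff, hX.apply_apply, hx]
    simp [(Fin.castSucc_lt_last i).ne']
    module

section FiniteDimensional

variable {K W : Type*} [Field K] [AddCommGroup W] [Module K W] [FiniteDimensional K W]

theorem exists_eq_zero_of_eigenvectors {ι : Type*} [Infinite ι] {h : End K W} {μ : ι → K}
    (hμ : Function.Injective μ) {v : ι → W} (hv : ∀ i, h (v i) = μ i • v i) : ∃ i, v i = 0 := by
  by_contra! hne
  have hli := End.eigenvectors_linearIndependent' h μ hμ v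
    fun i => ⟨End.mem_eigenspace_iff.2 (hv i), hne i⟩
  exact not_finite_iff_infinite.2 inferInstance hli.finite

variable [IsAlgClosed K] [CharZero K]

theorem exists_lowest_eigenspace {h : End K W} {Z : Submodule K W} (hZ : Z ≠ ⊥)
    (hs : Z ∈ h.invtSubmodule) :
    ∃ c, Z ⊓ End.eigenspace h c ≠ ⊥ ∧ Z ⊓ End.eigenspace h (c - 1) = ⊥ := by
  have := Submodule.nontrivial_iff_ne_bot.2 hZ
  obtain ⟨a, ha⟩ := End.exists_eigenvalue (h.restrict hs)
  obtain ⟨z, hz, hz0⟩ := ha.exists_hasEigenvector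
  have hza : h z = a • (z : W) := congrArg Subtype.val (End.mem_eigenspace_iff.1 hz)
  by_contra! hdown
  have hne (k : ℕ) : Z ⊓ End.eigenspace h (a - k) ≠ ⊥ := by
    induction k with
    | zero =>
      refine (Submodule.ne_bot_iff _).2 ⟨z, ⟨z.2, ?_⟩, by simpa using hz0⟩
      simpa using hza
    | succ k ih => simpa [sub_sub] using hdown _ ih
  choose v hv hv0 using fun k => Submodule.exists_mem_ne_zero_of_ne_bot (hne k)
  obtain ⟨k, hk⟩ := exists_eq_zero_of_eigenvectors (h := h) (fun k l hkl => by simpa using hkl)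
    fun k => End.mem_eigenspace_iff.1 (hv k).2
  exact hv0 k hk

theorem exists_inf_bottomLayer_ne_bot {n : ℕ}
    {E : Matrix (Fin (n + 1)) (Fin (n + 1)) (End K W)} (hE : IsGLAction E) {Z : Submodule K W}
    (hZ : Z ≠ ⊥) (hs : IsStable (entries E) Z) : ∃ c, Z ⊓ bottomLayer E c ≠ ⊥ := by
  obtain ⟨c, hc, hc'⟩ :=
    exists_lowest_eigenspace hZ (isStable_entries.1 hs (Fin.last n) (Fin.last n))
  exact ⟨c, ne_bot_of_le_ne_bot hc fun x hx =>
    ⟨hx.1, hx.2, hE.inf_eigenspace_le_lastColumnKer hs hc' hx⟩⟩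

theorem exists_inf_highestWeightSpace_ne_bot {n : ℕ}
    {E : Matrix (Fin n) (Fin n) (End K W)} (hE : IsGLAction E) {Z : Submodule K W} (hZ : Z ≠ ⊥)
    (hs : IsStable (entries E) Z) : ∃ r, Z ⊓ highestWeightSpace E r ≠ ⊥ := by
  induction n generalizing Z with
  | zero => exact ⟨0, by simpa [highestWeightSpace_zero] using hZ⟩
  | succ n ih =>
    obtain ⟨c, hc⟩ := exists_inf_bottomLayer_ne_bot hE hZ hs
    have hlayer := isStable_bottomLayer (G := ∅) hE (by simp) c
    rw [Set.union_empty] at hlayer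
    obtain ⟨r, hr⟩ := ih hE.dropLast hc ((hs.mono (entries_dropLast_subset E)).inf hlayer)
    refine ⟨Fin.snoc r c, ?_⟩
    rwa [highestWeightSpace_succ, ← inf_assoc, Fin.snoc_last, Fin.snoc_comp_castSucc]

end FiniteDimensional

section SL2

variable {K W : Type*} [Field K] [AddCommGroup W] [Module K W] {I : Type*}
  [DecidableEq I] {E : Matrix I I (End K W)} {i j : I} {x : W} {a b : K}

theorem IsGLTensor.diag_apply_pow_apply (hE : IsGLAction E) {s : I} (ha : E s s x = a • x) (k : ℕ) :
    E s s ((E i j ^ k) x) =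
      (a + k * ((if s = i then 1 else 0) - if s = j then 1 else 0)) • (E i j ^ k) x := by
  induction k with
  | zero => simpa using ha
  | succ k ih =>
    rw [pow_succ', End.mul_apply, hE.apply_apply, ih]
    simp only [@eq_comm I j]
    split_ifs <;> subst_vars <;> simp <;> module

variable [CharZero K] [FiniteDimensional K W]

attribute [local instance] LieRing.ofAssociativeRing in
theorem IsGLTensor.exists_natCast_eq_sub (hE : IsGLAction E) (hij : i ≠ j) (hx : x ≠ 0)
    (hup : E i j x = 0) (ha : E i i x = a • x) (hb : E j j x = b • x) :
    ∃ N : ℕ, a - b = N ∧ (E j i ^ N) x ≠ 0 := by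
  by_cases h0 : E i i - E j j = 0
  · have hab : (a - b) • x = 0 := by
      rw [sub_smul, ← ha, ← hb, ← LinearMap.sub_apply, h0, LinearMap.zero_apply]
    exact ⟨0, by simpa using (smul_eq_zero.1 hab).resolve_right hx, by simpa using hx⟩
  have htriple : IsSl2Triple (E i i - E j j) (E i j) (E j i) :=
    { h_ne_zero := h0
      lie_e_f := by simp [hE i j j i]
      lie_h_e_nsmul := by simp [sub_lie, hE _ _ i j, hij.symm, two_smul]
      lie_h_f_nsmul := by simp [hE _ _ j i, hij, two_smul, sub_eq_add_neg] }
  have hprim : htriple.HasPrimitiveVectorWith x (a - b) :=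
    { ne_zero := hx
      lie_h := by simp [ha, hb, sub_smul]
      lie_e := hup }
  obtain ⟨N, hN⟩ := hprim.exists_nat
  refine ⟨N, hN, ?_⟩
  simpa using hprim.pow_toEnd_f_ne_zero_of_eq_nat hN le_rfl

end SL2

section Dominance

variable {K : Type*} [Field K] {n : ℕ}

/-- A tuple is dominant if the differences `r_i - r_j`, `i ≤ j`, are natural numbers. -/
def IsDominant (r : Fin n → K) : Prop :=
  ∀ ⦃i j⦄, i ≤ j → ∃ N : ℕ, r i = r j + N

theorem IsDominant.exists_sub_natCast_eq {r : Fin n → K} (hr : IsDominant r) {i j : Fin n}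
    (hij : i ≤ j) : ∃ N : ℕ, r i - (i : ℕ) = r j - (j : ℕ) + N ∧ (j - i : ℕ) ≤ N := by
  obtain ⟨N, hN⟩ := hr hij
  refine ⟨N + (j - i : ℕ), ?_, Nat.le_add_left _ _⟩
  push_cast [Nat.cast_sub (Fin.le_def.1 hij)]
  linear_combination hN

theorem IsDominant.injective_sub_natCast [CharZero K] {r : Fin n → K} (hr : IsDominant r) :
    Function.Injective fun i => r i - ((i : ℕ) : K) := by
  refine Function.Injective.of_lt_imp_ne fun i j hij h => ?_
  obtain ⟨N, hN, hle⟩ := hr.exists_sub_natCast_eq hij.le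
  obtain rfl : N = 0 := by simpa [h] using hN
  have := Fin.lt_def.1 hij
  omega

theorem IsDominant.sub_natCast_mem_bracketC {lam : Fin (n + 1) → ℂ} {nu : Fin n → ℂ} {p : Fin n}
    {k : ℕ} (hlam : IsDominant lam) (hnu : IsDominant nu) (hk : k ≠ 0)
    (h : lam ∘ Fin.castSucc = nu + Pi.single p (k : ℂ))
    (hp : ∃ N : ℕ, nu p = lam (Fin.last n) + N) :
    nu p - (p : ℕ) ∈ bracketC (n + 1) (lshiftC (n + 1) lam) 0 (Fin.last n) := by
  have hlamp : lam p.castSucc = nu p + k := by simpa using congrFun h p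
  have above {s : Fin (n + 1)} (hs : s ≤ p.castSucc) :
      ∃ N : ℕ, lshiftC (n + 1) lam s = nu p - (p : ℕ) + N ∧ N ≠ 0 := by
    obtain ⟨N, hN, -⟩ := hlam.exists_sub_natCast_eq hs
    refine ⟨N + k, ?_, by omega⟩
    simp only [lshiftC, hN, hlamp, Fin.val_castSucc]
    push_cast
    ring
  obtain ⟨B, hB⟩ := hp
  refine ⟨⟨B + (n - p), ?_⟩, (above (Fin.zero_le _)).imp fun N hN => hN.1, fun s _ _ hs => ?_⟩
  · simp only [lshiftC, hB, Fin.val_last]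
    push_cast [Nat.cast_sub p.is_lt.le]
    ring
  obtain hsp | hsp := le_or_gt s p.castSucc
  · obtain ⟨N, hN, hN0⟩ := above hsp
    exact hN0 (by simpa [hN] using hs)
  cases s using Fin.lastCases with
  | last =>
    have : B + n = p := by
      simp only [lshiftC, hB, Fin.val_last] at hs
      exact_mod_cast (by linear_combination hs : (B : ℂ) + n = (p : ℕ))
    have := p.is_lt
    omega
  | cast s =>
    have hsp : s ≠ p := (Fin.castSucc_lt_castSucc_iff.1 hsp).ne'
    have hlams : lam s.castSucc = nu s := by simpa [hsp] using congrFun h s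
    exact hsp (hnu.injective_sub_natCast (by simpa [lshiftC, hlams] using hs.symm))

end Dominance

section Gap

variable {K W : Type*} [Field K] [AddCommGroup W] [Module K W] {n : ℕ}

theorem isDominant_of_highestWeightSpace_ne_bot [CharZero K] [FiniteDimensional K W]
    {E : Matrix (Fin n) (Fin n) (End K W)} (hE : IsGLAction E) {r : Fin n → K}
    (hr : highestWeightSpace E r ≠ ⊥) : IsDominant r := by
  obtain ⟨x, hx, hx0⟩ := Submodule.exists_mem_ne_zero_of_ne_bot hr
  obtain ⟨hup, hdiag⟩ := mem_highestWeightSpace.1 hx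
  intro i j hij
  obtain rfl | hij := hij.eq_or_lt
  · exact ⟨0, by simp⟩
  · obtain ⟨N, hN, -⟩ := hE.exists_natCast_eq_sub hij.ne hx0 (hup i j hij) (hdiag i) (hdiag j)
    exact ⟨N, eq_add_of_sub_eq' hN⟩

variable {E : Matrix (Fin (n + 1)) (Fin (n + 1)) (End K W)} {G : Set (End K W)}
  {P : Submodule K W} {v : W} {e t : K} {nu : Fin n → K} {p : Fin n}

theorem IsGLTensor.sq_sub_smul (hE : IsGLAction E) (t : K) : IsGLTensor E (E * E - t • E) := by
  simpa [sub_eq_add_neg] using (hE.mul hE).add_right (hE.smul_right (-t))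

theorem raise_mem_lastColumnKer {X : Matrix (Fin (n + 1)) (Fin (n + 1)) (End K W)}
    (hX : IsGLTensor E X) (hv : v ∈ lastColumnKer X) (p : Fin n) :
    E p.castSucc (Fin.last n) v ∈ lastColumnKer X := by
  refine mem_lastColumnKer.2 fun i => ?_
  have hv := mem_lastColumnKer.1 hv
  have hcomm := hX.apply_apply p.castSucc (Fin.last n) i.castSucc (Fin.last n) v
  simpa [hv, (Fin.castSucc_lt_last _).ne'] using hcomm.symm

theorem raise_mem_highestWeightSpace (hE : IsGLAction E)
    (hv : v ∈ highestWeightSpace (dropLast E) nu) (hp : ∀ i < p, E i.castSucc (Fin.last n) v = 0) :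
    E p.castSucc (Fin.last n) v ∈ highestWeightSpace (dropLast E) (nu + Pi.single p 1) := by
  obtain ⟨hup, hdiag⟩ := mem_highestWeightSpace.1 hv
  simp only [dropLast, submatrix_apply] at hup hdiag
  refine mem_highestWeightSpace.2 ⟨fun i j hij => ?_, fun i => ?_⟩ <;>
    simp only [dropLast, submatrix_apply] <;> rw [hE.apply_apply]
  · obtain rfl | hjp := eq_or_ne j p
    · simp [hup i j hij, hp i hij, (Fin.castSucc_lt_last _).ne']
    · simp [hup i j hij, hjp, (Fin.castSucc_lt_last _).ne']
  · obtain rfl | hip := eq_or_ne i p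
    · simp [hdiag, (Fin.castSucc_lt_last _).ne', add_smul]
    · simp [hdiag, hip, (Fin.castSucc_lt_last _).ne']

theorem sq_apply_eq_smul_raise (hE : IsGLAction E) (hv : v ∈ highestWeightSpace (dropLast E) nu)
    (he : E (Fin.last n) (Fin.last n) v = e • v) (hp : ∀ i < p, E i.castSucc (Fin.last n) v = 0) :
    (E * E) p.castSucc (Fin.last n) v =
      (nu p + e + (n - (p : ℕ))) • E p.castSucc (Fin.last n) v := by
  obtain ⟨hup, hdiag⟩ := mem_highestWeightSpace.1 hv
  simp only [dropLast, submatrix_apply] at hup hdiag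
  have term (a : Fin n) : E p.castSucc a.castSucc (E a.castSucc (Fin.last n) v) =
      ((if a = p then nu p else 0) + if p ≤ a then (1 : K) else 0) •
        E p.castSucc (Fin.last n) v := by
    rw [hE.apply_apply]
    obtain hap | rfl | hpa := lt_trichotomy a p
    · rw [← hE.apply_apply, hp a hap]
      simp [hap.ne, hap.not_ge]
    · simp [hdiag, (Fin.castSucc_lt_last _).ne', add_smul]
    · simp [hup p a hpa, hpa.ne', hpa.le, (Fin.castSucc_lt_last _).ne']
  have hcard : (Finset.univ.filter fun a : Fin n => p ≤ a).card = n - p := by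
    rw [← Fin.card_Ici p]
    congr 1
    ext
    simp
  rw [Matrix.mul_apply, LinearMap.sum_apply, Fin.sum_univ_castSucc]
  simp only [End.mul_apply, term, he, map_smul]
  rw [← Finset.sum_smul, ← add_smul, Finset.sum_add_distrib, Finset.sum_boole, hcard,
    Nat.cast_sub p.is_lt.le, Finset.sum_ite_eq', if_pos (Finset.mem_univ _)]
  congr 1
  ring

namespace IsSimpleGLModule

variable [CharZero K] {lam : Fin (n + 1) → K}

theorem exists_raise_ne_zero (hP : IsSimpleGLModule E G P) {c : K} (hc : P ⊓ bottomLayer E c ≠ ⊥)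
    (hv : v ∈ P) (hv0 : v ≠ 0) (he : E (Fin.last n) (Fin.last n) v = e • v) (hec : e ≠ c) :
    ∃ p : Fin n, E p.castSucc (Fin.last n) v ≠ 0 ∧ ∀ i < p, E i.castSucc (Fin.last n) v = 0 := by
  have hex : ∃ p : Fin n, E p.castSucc (Fin.last n) v ≠ 0 := by
    by_contra! hzero
    refine hec (hP.bottomLayer_unique ((Submodule.ne_bot_iff _).2 ⟨v, ⟨hv, ?_⟩, hv0⟩) hc)
    exact mem_bottomLayer.2 ⟨he, hzero⟩
  obtain ⟨p, hp, hmin⟩ := WellFounded.has_min (wellFounded_lt (α := Fin n)) _ hex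
  exact ⟨p, hp, fun i hip => of_not_not fun hi => hmin i hi hip⟩

theorem exists_raise (hP : IsSimpleGLModule E G P) {c : K} (hc : P ⊓ bottomLayer E c ≠ ⊥)
    (hvP : v ∈ P) (hv0 : v ≠ 0) (hv : v ∈ highestWeightSpace (dropLast E) nu)
    (he : E (Fin.last n) (Fin.last n) v = e • v) (hec : e ≠ c)
    (ht : v ∈ lastColumnKer (E * E - t • E)) :
    ∃ p : Fin n, t = nu p + e + (n - (p : ℕ)) ∧ E p.castSucc (Fin.last n) v ≠ 0 ∧
      E p.castSucc (Fin.last n) v ∈ highestWeightSpace (dropLast E) (nu + Pi.single p 1) := by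
  have hE := hP.isGLAction
  obtain ⟨p, hp0, hp⟩ := hP.exists_raise_ne_zero hc hvP hv0 he hec
  refine ⟨p, smul_left_injective K hp0 ?_, hp0, raise_mem_highestWeightSpace hE hv hp⟩
  have htp := sub_eq_zero.1 (mem_lastColumnKer.1 ht p)
  exact htp.symm.trans (sq_apply_eq_smul_raise hE hv he hp)

theorem inf_eigenspace_le_bottomLayer (hP : IsSimpleGLModule E G P) {c : K}
    (hc : P ⊓ bottomLayer E c ≠ ⊥) :
    P ⊓ End.eigenspace (E (Fin.last n) (Fin.last n)) c ≤ P ⊓ bottomLayer E c :=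
  hP.inf_eigenspace_le le_rfl hc (hP.isStable_inf_bottomLayer c)

variable [FiniteDimensional K W]

/-- The condition on `E²` is preserved by raising and singles out one index `p`, so a single
operator `E_{pn}`, applied `k` times, leads from `v` to the highest weight space. -/
theorem comp_castSucc_eq_add_single (hP : IsSimpleGLModule E G P)
    (hlam : P ⊓ highestWeightSpace E lam ≠ ⊥) {k : ℕ} (hvP : v ∈ P) (hv0 : v ≠ 0)
    (hv : v ∈ highestWeightSpace (dropLast E) nu)
    (he : E (Fin.last n) (Fin.last n) v = (lam (Fin.last n) + k) • v)
    (ht : v ∈ lastColumnKer (E * E - t • E))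
    (hp : t = nu p + (lam (Fin.last n) + k) + (n - (p : ℕ))) :
    lam ∘ Fin.castSucc = nu + Pi.single p (k : K) := by
  have hE := hP.isGLAction
  rw [highestWeightSpace_succ, ← inf_assoc] at hlam
  have hlayer := ne_bot_of_le_ne_bot hlam inf_le_left
  induction k generalizing nu v with
  | zero =>
    have hvb := hP.inf_eigenspace_le_bottomLayer hlayer
      ⟨hvP, End.mem_eigenspace_iff.2 (by simpa using he)⟩
    simpa using (hP.inf_bottomLayer _).highestWeight_unique hlam
      ((Submodule.ne_bot_iff _).2 ⟨v, ⟨hvb, hv⟩, hv0⟩)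
  | succ k ih =>
    have hk : lam (Fin.last n) + (k + 1 : ℕ) ≠ lam (Fin.last n) := by
      simpa using Nat.cast_add_one_ne_zero k
    obtain ⟨q, hq, hq0, hqv⟩ := hP.exists_raise hlayer hvP hv0 hv he hk ht
    have hnu := isDominant_of_highestWeightSpace_ne_bot hE.dropLast
      ((Submodule.ne_bot_iff _).2 ⟨v, hv, hv0⟩)
    obtain rfl : q = p := hnu.injective_sub_natCast (by linear_combination hp - hq)
    have heq : E (Fin.last n) (Fin.last n) (E q.castSucc (Fin.last n) v) =
        (lam (Fin.last n) + k) • E q.castSucc (Fin.last n) v := by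
      rw [hE.apply_apply, he]
      simp [(Fin.castSucc_lt_last q).ne']
      module
    rw [ih (hP.apply_mem _ _ hvP) hq0 hqv heq (raise_mem_lastColumnKer (hE.sq_sub_smul t) ht q)
      (by push_cast at hp; simp; linear_combination hp), add_assoc, ← Pi.single_add]
    simp [add_comm]

theorem exists_eq_last_add_natCast (hP : IsSimpleGLModule E G P) {c a b : K}
    (hc : P ⊓ bottomLayer E c ≠ ⊥) (hvP : v ∈ P) (hv0 : v ≠ 0)
    (ha : E p.castSucc p.castSucc v = a • v) (hb : E (Fin.last n) (Fin.last n) v = b • v) :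
    ∃ N : ℕ, a = c + N := by
  have hE := hP.isGLAction
  have hpn := (Fin.castSucc_lt_last p).ne
  have hpow {i j : Fin (n + 1)} {x : W} (hx : x ∈ P) (k : ℕ) : (E i j ^ k) x ∈ P := by
    induction k with
    | zero => exact hx
    | succ k ih => rw [pow_succ']; exact hP.apply_mem i j ih
  have hwt (k) := hE.diag_apply_pow_apply (i := Fin.last n) (j := p.castSucc) hb k
  obtain ⟨k, hk, hk'⟩ := Nat.exists_not_and_succ_of_not_zero_of_exists
    (p := fun k => (E (Fin.last n) p.castSucc ^ k) v = 0) (by simpa using hv0)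
    (exists_eq_zero_of_eigenvectors (fun k l hkl => by simpa [hpn.symm] using hkl) hwt)
  rw [pow_succ', End.mul_apply] at hk'
  obtain ⟨N, hN, hN0⟩ := hE.exists_natCast_eq_sub hpn.symm hk hk' (hwt k)
    (hE.diag_apply_pow_apply ha k)
  obtain ⟨M, hM⟩ := hP.exists_eq_add_natCast hc (hpow (hpow hvP k) N) hN0
    (hE.diag_apply_pow_apply (hwt k) N)
  refine ⟨M + k, ?_⟩
  simp only [hpn, hpn.symm, if_true, if_false] at hN hM
  push_cast
  linear_combination hM - hN

end IsSimpleGLModule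

/-- In the application `t` is the eigenvalue of `E_{nn} + F_{nn}` on `U`, and the number on the left
is the last shifted weight `m_n`: this is where the separation condition enters. -/
theorem IsSimpleGLModule.sub_mem_bracketC {W : Type*} [AddCommGroup W] [Module ℂ W]
    [FiniteDimensional ℂ W] {E : Matrix (Fin (n + 1)) (Fin (n + 1)) (End ℂ W)} {G : Set (End ℂ W)}
    {P : Submodule ℂ W} (hP : IsSimpleGLModule E G P) {lam : Fin (n + 1) → ℂ}
    (hlam : P ⊓ highestWeightSpace E lam ≠ ⊥) {k : ℕ} {t : ℂ} (hk : k ≠ 0) {v : W} (hvP : v ∈ P)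
    (hv0 : v ≠ 0) (he : E (Fin.last n) (Fin.last n) v = (lam (Fin.last n) + k) • v)
    (ht : v ∈ lastColumnKer (E * E - t • E)) :
    t - (lam (Fin.last n) + k) - n ∈ bracketC (n + 1) (lshiftC (n + 1) lam) 0 (Fin.last n) := by
  have hE := hP.isGLAction
  have hlayer := ne_bot_of_le_ne_bot hlam (inf_le_inf_left P highestWeightSpace_le_bottomLayer)
  let Z := P ⊓ (End.eigenspace (E (Fin.last n) (Fin.last n)) (lam (Fin.last n) + k) ⊓
    lastColumnKer (E * E - t • E))
  have hZ : Z ≠ ⊥ :=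
    (Submodule.ne_bot_iff Z).2 ⟨v, ⟨hvP, End.mem_eigenspace_iff.2 he, ht⟩, hv0⟩
  have hZs : IsStable (entries (dropLast E)) Z := by
    refine (hP.isStable_entries.mono (entries_dropLast_subset E)).inf
      ((isStable_eigenspace ?_ _).inf (isStable_lastColumnKer (hE.sq_sub_smul t)))
    rintro _ ⟨i, j, rfl⟩
    exact commute_last_dropLast hE i j
  obtain ⟨nu, hnu⟩ := exists_inf_highestWeightSpace_ne_bot hE.dropLast hZ hZs
  obtain ⟨x, ⟨⟨hxP, hxe, hxt⟩, hx⟩, hx0⟩ := Submodule.exists_mem_ne_zero_of_ne_bot hnu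
  rw [SetLike.mem_coe, End.mem_eigenspace_iff] at hxe
  obtain ⟨p, hp, -⟩ := hP.exists_raise hlayer hxP hx0 hx hxe (by simpa using hk) hxt
  have hsub : t - (lam (Fin.last n) + k) - n = nu p - (p : ℕ) := by linear_combination hp
  rw [hsub]
  exact (isDominant_of_highestWeightSpace_ne_bot hE
      (ne_bot_of_le_ne_bot hlam inf_le_right)).sub_natCast_mem_bracketC
    (isDominant_of_highestWeightSpace_ne_bot hE.dropLast (ne_bot_of_le_ne_bot hnu inf_le_right)) hk
    (hP.comp_castSucc_eq_add_single hlam hxP hx0 hx hxe hxt hp)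
    (hP.exists_eq_last_add_natCast hlayer hxP hx0 ((mem_highestWeightSpace.1 hx).2 p) hxe)

end Gap

section GradedVectors

variable {K W : Type*} [Field K] [CharZero K] [AddCommGroup W] [Module K W]

theorem apply_add_apply_succ_eq_zero {h A B : End K W} {b : K} {v : ℕ →₀ W}
    (hv : ∀ k : ℕ, h (v k) = (b + k) • v k) (hA : ∀ x, h (A x) = A (h x))
    (hB : ∀ x, h (B x) = B (h x) - B x) (hB0 : B (v 0) = 0)
    (hsum : (A + B) (v.sum fun _ x => x) = 0) (k : ℕ) : A (v k) + B (v (k + 1)) = 0 := by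
  obtain ⟨N, hN⟩ := v.support.exists_nat_subset_range
  have hvN {k} (hk : N ≤ k) : v k = 0 :=
    Finsupp.notMem_support_iff.1 fun hmem => (Finset.mem_range.1 (hN hmem)).not_ge hk
  obtain hk | hk := le_or_gt N k
  · simp [hvN hk, hvN (hk.trans k.le_succ)]
  refine eq_zero_of_sum_eigenvectors_eq_zero (h := h) (μ := fun k : ℕ => b + k)
    (v := fun k => A (v k) + B (v (k + 1))) (fun k l hkl => by simpa using hkl) (fun k => ?_) ?_ k
    (Finset.mem_range.2 hk)
  · rw [map_add, hA, hB, hv, hv, map_smul, map_smul]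
    push_cast
    module
  · have hshift : ∑ k ∈ Finset.range N, B (v (k + 1)) = ∑ k ∈ Finset.range N, B (v k) := by
      rw [← add_zero (∑ k ∈ Finset.range N, B (v (k + 1))), ← hB0,
        ← Finset.sum_range_succ' (fun k => B (v k)), Finset.sum_range_succ, hvN le_rfl, map_zero,
        add_zero]
    rw [Finsupp.sum_of_support_subset v hN _ fun _ _ => rfl] at hsum
    simpa [Finset.sum_add_distrib, hshift] using hsum

theorem exists_ne_zero_and_forall_gt_eq_zero {M : Type*} [Zero M] {v : ℕ →₀ M} (hv : v ≠ 0) :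
    ∃ N, v N ≠ 0 ∧ ∀ k > N, v k = 0 := by
  obtain ⟨N, hN, hmax⟩ := v.support.exists_max_image id (Finsupp.support_nonempty_iff.2 hv)
  exact ⟨N, Finsupp.mem_support_iff.1 hN,
    fun k hk => Finsupp.notMem_support_iff.1 fun hmem => (hmax k hmem).not_gt hk⟩

end GradedVectors

section LowestLayer

variable {K W : Type*} [Field K] [CharZero K] [AddCommGroup W] [Module K W] {n : ℕ}
  {E F : Matrix (Fin (n + 1)) (Fin (n + 1)) (End K W)} {b c : K} {v : ℕ →₀ W}

theorem last_apply_eq_smul (hEF : ∀ i j k l, Commute (E i j) (F k l))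
    (hv : ∀ k : ℕ, E (Fin.last n) (Fin.last n) (v k) = (b + k) • v k)
    (hc : (E + F) (Fin.last n) (Fin.last n) (v.sum fun _ x => x) = c • v.sum fun _ x => x)
    (k : ℕ) : F (Fin.last n) (Fin.last n) (v k) = (c - b - k) • v k := by
  have h := apply_add_apply_succ_eq_zero (A := (E + F) (Fin.last n) (Fin.last n) - c • 1) (B := 0)
    hv (fun x => ?_) (by simp) (by simp) (by simpa [sub_eq_zero] using hc) k
  · simp only [LinearMap.sub_apply, Matrix.add_apply, LinearMap.add_apply, hv, LinearMap.smul_apply,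
      End.one_apply, LinearMap.zero_apply, add_zero] at h
    linear_combination (norm := module) h
  · have hcomm := LinearMap.congr_fun (hEF (Fin.last n) (Fin.last n) (Fin.last n) (Fin.last n)).eq x
    rw [End.mul_apply, End.mul_apply] at hcomm
    simp [hcomm]

theorem column_apply_add_apply_succ_eq_zero (hE : IsGLAction E)
    (hEF : ∀ i j k l, Commute (E i j) (F k l))
    (hv : ∀ k : ℕ, E (Fin.last n) (Fin.last n) (v k) = (b + k) • v k)
    (hv0 : v 0 ∈ lastColumnKer E) (h1 : (v.sum fun _ x => x) ∈ lastColumnKer (E + F))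
    (k : ℕ) (i : Fin n) :
    F i.castSucc (Fin.last n) (v k) + E i.castSucc (Fin.last n) (v (k + 1)) = 0 := by
  refine apply_add_apply_succ_eq_zero hv
    (fun x => LinearMap.congr_fun (hEF _ _ _ _).eq x) (fun x => ?_)
    (mem_lastColumnKer.1 hv0 i) ?_ k
  · rw [hE.apply_apply]
    simp [(Fin.castSucc_lt_last i).ne', sub_eq_add_neg]
  · rw [add_comm]
    exact mem_lastColumnKer.1 h1 i

theorem succ_mem_lastColumnKer_sq_sub_smul (hE : IsGLAction E)
    (hEF : ∀ i j k l, Commute (E i j) (F k l))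
    (hv : ∀ k : ℕ, E (Fin.last n) (Fin.last n) (v k) = (b + k) • v k)
    (hv0 : v 0 ∈ lastColumnKer E) (h1 : (v.sum fun _ x => x) ∈ lastColumnKer (E + F))
    (h2 : (v.sum fun _ x => x) ∈ lastColumnKer (E * F))
    (hc : (E + F) (Fin.last n) (Fin.last n) (v.sum fun _ x => x) = c • v.sum fun _ x => x)
    (k : ℕ) : v (k + 1) ∈ lastColumnKer (E * E - c • E) := by
  have hEFx (i j k l x) : E i j (F k l x) = F k l (E i j x) :=
    LinearMap.congr_fun (hEF i j k l).eq x
  refine mem_lastColumnKer.2 fun i => ?_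
  have hcol := column_apply_add_apply_succ_eq_zero hE hEF hv hv0 h1 k
  have h := apply_add_apply_succ_eq_zero
    (A := ∑ a : Fin n, E i.castSucc a.castSucc * F a.castSucc (Fin.last n))
    (B := E i.castSucc (Fin.last n) * F (Fin.last n) (Fin.last n))
    hv (fun x => ?_) (fun x => ?_) ?_ ?_ k
  · simp only [LinearMap.sum_apply, End.mul_apply, last_apply_eq_smul hEF hv hc,
      eq_neg_of_add_eq_zero_left (hcol _), map_neg, map_smul, Finset.sum_neg_distrib] at h
    simp only [LinearMap.sub_apply, Matrix.sub_apply, Matrix.smul_apply, Matrix.mul_apply,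
      Fin.sum_univ_castSucc, LinearMap.add_apply, LinearMap.sum_apply, End.mul_apply, hv, map_smul,
      LinearMap.smul_apply]
    linear_combination (norm := module) -h
  · simp [hE.apply_apply (Fin.last n), hEFx, (Fin.castSucc_lt_last _).ne,
      (Fin.castSucc_lt_last _).ne']
  · simp [hE.apply_apply (Fin.last n), hEFx, (Fin.castSucc_lt_last _).ne', sub_eq_add_neg]
  · simp [hEFx, mem_lastColumnKer.1 hv0 i]
  · simpa [Matrix.mul_apply, Fin.sum_univ_castSucc] using mem_lastColumnKer.1 h2 i

end LowestLayer

section Bimodule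

variable {K W : Type*} [Field K] [AddCommGroup W] [Module K W] {n : ℕ}

/-- `W` is simple under two commuting actions `E` and `F` of `gl_n`, and `w ≠ 0` is singular for
both, of weights `lam` and `mu`. The model case is `L(λ) ⊗ L(μ)`. -/
structure IsGLBimodule (E F : Matrix (Fin n) (Fin n) (End K W)) (lam mu : Fin n → K) (w : W) :
    Prop where
  isGLAction_left : IsGLAction E
  isGLAction_right : IsGLAction F
  commute : ∀ i j k l, Commute (E i j) (F k l)
  isSimple : IsSimpleUnder (entries E ∪ entries F) ⊤
  ne_zero : w ≠ 0
  mem_left : w ∈ highestWeightSpace E lam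
  mem_right : w ∈ highestWeightSpace F mu

/-- The operators by which the Yangian acts: `t^{(1)}` is `E + F` and `t^{(2)}` is `E F`. -/
def yangianOperators (E F : Matrix (Fin n) (Fin n) (End K W)) : Set (End K W) :=
  entries (E + F) ∪ entries (E * F)

namespace IsGLBimodule

variable {E F : Matrix (Fin n) (Fin n) (End K W)} {lam mu : Fin n → K} {w : W}

theorem swap (h : IsGLBimodule E F lam mu w) : IsGLBimodule F E mu lam w where
  isGLAction_left := h.isGLAction_right
  isGLAction_right := h.isGLAction_left
  commute _ _ _ _ := (h.commute _ _ _ _).symm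
  isSimple := Set.union_comm (entries E) (entries F) ▸ h.isSimple
  ne_zero := h.ne_zero
  mem_left := h.mem_right
  mem_right := h.mem_left

theorem isSimpleGLModule (h : IsGLBimodule E F lam mu w) :
    IsSimpleGLModule E (entries F) ⊤ where
  isGLAction := h.isGLAction_left
  commute := by
    rintro _ ⟨k, l, rfl⟩ i j
    exact (h.commute i j k l).symm
  isSimple := h.isSimple

theorem highestWeightSpace_ne_bot (h : IsGLBimodule E F lam mu w) :
    ⊤ ⊓ highestWeightSpace E lam ≠ ⊥ :=
  (Submodule.ne_bot_iff _).2 ⟨w, ⟨trivial, h.mem_left⟩, h.ne_zero⟩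

theorem bottomLayer_ne_bot {E F : Matrix (Fin (n + 1)) (Fin (n + 1)) (End K W)}
    {lam mu : Fin (n + 1) → K} (h : IsGLBimodule E F lam mu w) :
    ⊤ ⊓ bottomLayer E (lam (Fin.last n)) ≠ ⊥ :=
  ne_bot_of_le_ne_bot h.highestWeightSpace_ne_bot
    (inf_le_inf_left ⊤ highestWeightSpace_le_bottomLayer)

theorem isGLTensor_left (h : IsGLBimodule E F lam mu w) : IsGLTensor (E + F) E :=
  h.isGLAction_left.add_left fun _ _ _ _ => (h.commute _ _ _ _).symm

theorem isGLTensor_right (h : IsGLBimodule E F lam mu w) : IsGLTensor (E + F) F :=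
  add_comm E F ▸ h.swap.isGLTensor_left

theorem exists_mem_lastColumnKer [IsAlgClosed K] [CharZero K] [FiniteDimensional K W]
    {E F : Matrix (Fin (n + 1)) (Fin (n + 1)) (End K W)} {lam mu : Fin (n + 1) → K}
    (h : IsGLBimodule E F lam mu w) {U : Submodule K W} (hU : U ≠ ⊥)
    (hs : IsStable (yangianOperators E F) U) :
    ∃ c : K, ∃ u ∈ U, u ≠ 0 ∧ (E + F) (Fin.last n) (Fin.last n) u = c • u ∧
      u ∈ lastColumnKer (E + F) ∧ u ∈ lastColumnKer (E * F) := by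
  obtain ⟨hs1, hs2⟩ := isStable_union.1 hs
  have hE := h.isGLTensor_left
  have hF := h.isGLTensor_right
  obtain ⟨c, hc, hc'⟩ :=
    exists_lowest_eigenspace hU (isStable_entries.1 hs1 (Fin.last n) (Fin.last n))
  obtain ⟨u, hu, hu0⟩ := Submodule.exists_mem_ne_zero_of_ne_bot hc
  exact ⟨c, u, hu.1, hu0, End.mem_eigenspace_iff.1 hu.2,
    (hE.add_right hF).inf_eigenspace_le_lastColumnKer hs1 hc' hu,
    (hE.mul hF).inf_eigenspace_le_lastColumnKer hs2 hc' hu⟩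

theorem inf_bottomLayers_ne_bot {W : Type*} [AddCommGroup W] [Module ℂ W] [FiniteDimensional ℂ W]
    {E F : Matrix (Fin (n + 1)) (Fin (n + 1)) (End ℂ W)} {lam mu : Fin (n + 1) → ℂ} {w : W}
    (h : IsGLBimodule E F lam mu w)
    (hb : lshiftC (n + 1) mu (Fin.last n) ∉ bracketC (n + 1) (lshiftC (n + 1) lam) 0 (Fin.last n))
    {U : Submodule ℂ W} (hU : U ≠ ⊥) (hs : IsStable (yangianOperators E F) U) :
    U ⊓ (bottomLayer E (lam (Fin.last n)) ⊓ bottomLayer F (mu (Fin.last n))) ≠ ⊥ := by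
  obtain ⟨c, u, huU, hu0, huc, hu1, hu2⟩ := h.exists_mem_lastColumnKer hU hs
  have hE := h.isSimpleGLModule
  have htower := hE.iSup_tower_eq inf_le_left inf_le_right h.bottomLayer_ne_bot
    (hE.isStable_inf_bottomLayer _)
  obtain ⟨v, hv, rfl⟩ := (Submodule.mem_iSup_iff_exists_finsupp _ _).1 (htower.ge (trivial : u ∈ ⊤))
  have hvE k := End.mem_eigenspace_iff.1
    (tower_le_eigenspace h.isGLAction_left inf_le_right k (hv k))
  have hv0 := (hv 0).2
  obtain ⟨N, hvN0, hzero⟩ := exists_ne_zero_and_forall_gt_eq_zero (v := v)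
    (by rintro rfl; simp at hu0)
  have hvF : v N ∈ bottomLayer F (c - lam (Fin.last n) - N) := by
    refine mem_bottomLayer.2 ⟨last_apply_eq_smul h.commute hvE huc N, fun i => ?_⟩
    simpa [hzero] using
      column_apply_add_apply_succ_eq_zero h.isGLAction_left h.commute hvE hv0.2 hu1 N i
  have hmu : c - lam (Fin.last n) - N = mu (Fin.last n) :=
    h.swap.isSimpleGLModule.bottomLayer_unique
      ((Submodule.ne_bot_iff _).2 ⟨v N, ⟨trivial, hvF⟩, hvN0⟩) h.swap.bottomLayer_ne_bot
  obtain rfl : N = 0 := by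
    by_contra hN0
    obtain ⟨k, rfl⟩ := Nat.exists_eq_succ_of_ne_zero hN0
    have hgap := hE.sub_mem_bracketC h.highestWeightSpace_ne_bot hN0 trivial hvN0 (hvE _)
      (succ_mem_lastColumnKer_sq_sub_smul h.isGLAction_left h.commute hvE hv0.2 hu1 hu2 huc k)
    rw [← sub_sub, hmu] at hgap
    exact hb (by simpa [lshiftC] using hgap)
  have hsum : (v.sum fun _ x => x) = v 0 :=
    Finset.sum_eq_single 0 (fun k _ hk => hzero k (Nat.pos_of_ne_zero hk))
      Finsupp.notMem_support_iff.1
  rw [hsum] at huU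
  exact (Submodule.ne_bot_iff _).2 ⟨v 0, ⟨huU, hv0, hmu ▸ hvF⟩, hvN0⟩

end IsGLBimodule

end Bimodule

section Restriction

variable {K W : Type*} [Field K] [AddCommGroup W] [Module K W] {I J : Type*}
  {P : Submodule K W}

/-- The operators induced on a stable subspace. -/
def restrictEntries (E : Matrix I J (End K W)) (hE : IsStable (entries E) P) :
    Matrix I J (End K P) :=
  Matrix.of fun i j => (E i j).restrict (isStable_entries.1 hE i j)

theorem coe_restrictEntries_apply {E : Matrix I J (End K W)} (hE : IsStable (entries E) P)
    (i : I) (j : J) (x : P) : (restrictEntries E hE i j x : W) = E i j x :=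
  rfl

theorem IsGLTensor.restrictEntries [DecidableEq I] {D X : Matrix I I (End K W)}
    (hX : IsGLTensor D X) (hDP : IsStable (entries D) P) (hXP : IsStable (entries X) P) :
    IsGLTensor (restrictEntries D hDP) (restrictEntries X hXP) := by
  intro i j k l
  ext x
  simp only [Ring.lie_def, LinearMap.sub_apply, End.mul_apply, Submodule.coe_sub,
    coe_restrictEntries_apply, hX.apply_apply i j k l, add_sub_cancel_left]
  congr 1 <;> split_ifs <;> rfl

theorem IsStable.map_subtype {E : Matrix I J (End K W)} {hE : IsStable (entries E) P}
    {N : Submodule K P} (hN : IsStable (entries (restrictEntries E hE)) N) :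
    IsStable (entries E) (N.map P.subtype) := by
  refine isStable_entries.2 fun i j => ?_
  rintro _ ⟨x, hx, rfl⟩
  exact ⟨_, isStable_entries.1 hN i j hx, rfl⟩

theorem IsSimpleUnder.restrictEntries {E F : Matrix I J (End K W)}
    (hP : IsSimpleUnder (entries E ∪ entries F) P) (hE : IsStable (entries E) P)
    (hF : IsStable (entries F) P) :
    IsSimpleUnder (entries (restrictEntries E hE) ∪ entries (restrictEntries F hF)) ⊤ where
  isStable := isStable_top _
  eq_bot_or_eq N _ hN := by
    obtain ⟨hNE, hNF⟩ := isStable_union.1 hN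
    have hinj := Submodule.map_injective_of_injective P.injective_subtype
    exact (hP.eq_bot_or_eq (N.map P.subtype) (Submodule.map_subtype_le P N)
      (isStable_union.2 ⟨IsStable.map_subtype hNE, IsStable.map_subtype hNF⟩)).imp
      (fun h => hinj (h.trans (Submodule.map_bot _).symm))
      fun h => hinj (h.trans (Submodule.map_subtype_top P).symm)

theorem mem_highestWeightSpace_restrictEntries {n : ℕ} {E : Matrix (Fin n) (Fin n) (End K W)}
    {hE : IsStable (entries E) P} {r : Fin n → K} {x : P} :
    x ∈ highestWeightSpace (restrictEntries E hE) r ↔ (x : W) ∈ highestWeightSpace E r := by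
  simp only [mem_highestWeightSpace, Subtype.ext_iff, coe_restrictEntries_apply,
    Submodule.coe_smul, ZeroMemClass.coe_zero]

end Restriction

section LayerBimodule

variable {K W : Type*} [Field K] [AddCommGroup W] [Module K W] {n : ℕ} {P : Submodule K W}

theorem IsSimpleGLModule.swap {m : ℕ} {E : Matrix (Fin m) (Fin m) (End K W)}
    {F : Matrix (Fin n) (Fin n) (End K W)}
    (hP : IsSimpleGLModule E (entries F) P) (hF : IsGLAction F) :
    IsSimpleGLModule F (entries E) P where
  isGLAction := hF
  commute := by
    rintro _ ⟨i, j, rfl⟩ k l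
    exact (hP.commute _ ⟨k, l, rfl⟩ i j).symm
  isSimple := Set.union_comm (entries E) (entries F) ▸ hP.isSimple

variable {E F : Matrix (Fin (n + 1)) (Fin (n + 1)) (End K W)} {lam mu : Fin (n + 1) → K} {w : W}

namespace IsGLBimodule

theorem mem_bottomLayers (h : IsGLBimodule E F lam mu w) :
    w ∈ bottomLayer E (lam (Fin.last n)) ⊓ bottomLayer F (mu (Fin.last n)) :=
  ⟨highestWeightSpace_le_bottomLayer h.mem_left, highestWeightSpace_le_bottomLayer h.mem_right⟩

variable [CharZero K]

theorem isSimpleUnder_inf_bottomLayers (h : IsGLBimodule E F lam mu w) (b c : K) :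
    IsSimpleUnder (entries (dropLast E) ∪ entries (dropLast F))
      (bottomLayer E b ⊓ bottomLayer F c) := by
  have hE := (h.isSimpleGLModule.inf_bottomLayer b).swap h.isGLAction_right
  simpa using ((hE.inf_bottomLayer c).swap h.isGLAction_left.dropLast).isSimple

theorem restrict (h : IsGLBimodule E F lam mu w)
    (hE : IsStable (entries (dropLast E))
      (bottomLayer E (lam (Fin.last n)) ⊓ bottomLayer F (mu (Fin.last n))))
    (hF : IsStable (entries (dropLast F))
      (bottomLayer E (lam (Fin.last n)) ⊓ bottomLayer F (mu (Fin.last n)))) :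
    IsGLBimodule (restrictEntries (dropLast E) hE) (restrictEntries (dropLast F) hF)
      (lam ∘ Fin.castSucc) (mu ∘ Fin.castSucc) ⟨w, h.mem_bottomLayers⟩ where
  isGLAction_left := h.isGLAction_left.dropLast.restrictEntries hE hE
  isGLAction_right := h.isGLAction_right.dropLast.restrictEntries hF hF
  commute _ _ _ _ := LinearMap.restrict_commute (h.commute _ _ _ _)
    (isStable_entries.1 hE _ _) (isStable_entries.1 hF _ _)
  isSimple := (h.isSimpleUnder_inf_bottomLayers _ _).restrictEntries hE hF
  ne_zero hw := h.ne_zero (congrArg Subtype.val hw)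
  mem_left := mem_highestWeightSpace_restrictEntries.2
    (((highestWeightSpace_succ E lam).le.trans inf_le_right) h.mem_left)
  mem_right := mem_highestWeightSpace_restrictEntries.2
    (((highestWeightSpace_succ F mu).le.trans inf_le_right) h.mem_right)

end IsGLBimodule

theorem IsStable.comap_subtype_bottomLayers {U : Submodule K W} {b c : K}
    (hs : IsStable (yangianOperators E F) U) (hEF : ∀ i j k l, Commute (E i j) (F k l))
    (hE : IsStable (entries (dropLast E)) (bottomLayer E b ⊓ bottomLayer F c))
    (hF : IsStable (entries (dropLast F)) (bottomLayer E b ⊓ bottomLayer F c)) :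
    IsStable (yangianOperators (restrictEntries (dropLast E) hE) (restrictEntries (dropLast F) hF))
      (U.comap (bottomLayer E b ⊓ bottomLayer F c).subtype) := by
  obtain ⟨hs1, hs2⟩ := isStable_union.1 hs
  refine isStable_union.2 ⟨isStable_entries.2 fun i j x hx => ?_,
    isStable_entries.2 fun i j x hx => ?_⟩
  · exact isStable_entries.1 hs1 i.castSucc j.castSucc hx
  · have hlast : E i.castSucc (Fin.last n) (F (Fin.last n) j.castSucc (x : W)) = 0 := by
      rw [← End.mul_apply, (hEF _ _ _ _).eq, End.mul_apply, (mem_bottomLayer.1 x.2.1).2 i, map_zero]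
    have hmul := isStable_entries.1 hs2 i.castSucc j.castSucc hx
    simpa [Matrix.mul_apply, Fin.sum_univ_castSucc, hlast, coe_restrictEntries_apply,
      dropLast_apply] using hmul

end LayerBimodule

section Duality

variable {K W : Type*} [Field K] [AddCommGroup W] [Module K W]

theorem isStable_highestWeightSpace {n : ℕ} {E : Matrix (Fin n) (Fin n) (End K W)}
    {S : Set (End K W)} (hS : ∀ g ∈ S, ∀ i j, Commute g (E i j)) (r : Fin n → K) :
    IsStable S (highestWeightSpace E r) := by
  intro g hg x hx
  rw [mem_highestWeightSpace] at hx
  rw [Submodule.mem_comap, mem_highestWeightSpace]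
  have hcomm i j : E i j (g x) = g (E i j x) := LinearMap.congr_fun (hS g hg i j).eq.symm x
  exact ⟨fun i j hij => by rw [hcomm, hx.1 i j hij, map_zero],
    fun i => by rw [hcomm, hx.2 i, map_smul]⟩

variable {I J : Type*}

/-- The transposed operators on the dual space; transposing the matrix as well turns an action of
`gl` into an action of `gl` again. -/
def dualMatrix (E : Matrix I J (End K W)) : Matrix J I (End K (Dual K W)) :=
  Eᵀ.map LinearMap.dualMap

theorem dualMatrix_apply_apply (E : Matrix I J (End K W)) (i : I) (j : J) (f : Dual K W) (x : W) :
    dualMatrix E j i f x = f (E i j x) :=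
  rfl

theorem entries_dualMatrix (E : Matrix I J (End K W)) :
    entries (dualMatrix E) = LinearMap.dualMap '' entries E := by
  ext g
  constructor
  · rintro ⟨j, i, rfl⟩
    exact ⟨_, ⟨i, j, rfl⟩, rfl⟩
  · rintro ⟨_, ⟨i, j, rfl⟩, rfl⟩
    exact ⟨j, i, rfl⟩

theorem dualMatrix_add (E F : Matrix I J (End K W)) :
    dualMatrix (E + F) = dualMatrix E + dualMatrix F := by
  ext i j f x
  simp [dualMatrix_apply_apply]

theorem dualMatrix_mul [Fintype I] (E F : Matrix I I (End K W)) :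
    dualMatrix (E * F) = dualMatrix F * dualMatrix E := by
  ext i j f x
  simp [dualMatrix_apply_apply, Matrix.mul_apply]

theorem IsGLTensor.dualMatrix [DecidableEq I] {D X : Matrix I I (End K W)}
    (hX : IsGLTensor D X) : IsGLTensor (dualMatrix D) (dualMatrix X) := by
  intro i j k l
  ext f x
  simp only [Ring.lie_def, LinearMap.sub_apply, End.mul_apply, dualMatrix_apply_apply,
    hX.apply_apply j i l k]
  split_ifs <;> simp_all [dualMatrix_apply_apply]

variable {S : Set (End K W)}

theorem IsStable.dualAnnihilator {U : Submodule K W} (hU : IsStable S U) :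
    IsStable (LinearMap.dualMap '' S) U.dualAnnihilator := by
  rintro _ ⟨g, hg, rfl⟩ f hf
  exact (Submodule.mem_dualAnnihilator _).2 fun x hx =>
    (Submodule.mem_dualAnnihilator _).1 hf _ (hU g hg hx)

theorem IsStable.dualCoannihilator {N : Submodule K (Dual K W)}
    (hN : IsStable (LinearMap.dualMap '' S) N) : IsStable S N.dualCoannihilator :=
  fun g hg _ hx => (Submodule.mem_dualCoannihilator _).2 fun _ hf =>
    (Submodule.mem_dualCoannihilator _).1 hx _ (hN _ ⟨g, hg, rfl⟩ hf)

theorem IsSimpleUnder.dual [FiniteDimensional K W] (hS : IsSimpleUnder S ⊤) :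
    IsSimpleUnder (LinearMap.dualMap '' S) ⊤ where
  isStable := isStable_top _
  eq_bot_or_eq N _ hN := by
    rw [← Subspace.dualCoannihilator_dualAnnihilator_eq (W := N)]
    refine (hS.eq_bot_or_eq N.dualCoannihilator le_top hN.dualCoannihilator).symm.imp ?_ ?_ <;>
      intro h <;> simp [h]

theorem yangianOperators_dualMatrix {n : ℕ} (E F : Matrix (Fin n) (Fin n) (End K W)) :
    yangianOperators (dualMatrix F) (dualMatrix E) = LinearMap.dualMap '' yangianOperators E F := by
  rw [yangianOperators, yangianOperators, ← dualMatrix_add, ← dualMatrix_mul, add_comm F E,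
    entries_dualMatrix, entries_dualMatrix, Set.image_union]

variable {n : ℕ} {E F : Matrix (Fin n) (Fin n) (End K W)} {lam mu : Fin n → K} {w : W}

theorem eq_weight_of_mem_dual {r : Fin n → K} {f : Dual K W}
    (hf : f ∈ highestWeightSpace (dualMatrix E) r) (hw : w ∈ highestWeightSpace E lam)
    (hfw : f w ≠ 0) : r = lam := by
  funext i
  refine mul_right_cancel₀ hfw ?_
  rw [mem_highestWeightSpace] at hf hw
  rw [← smul_eq_mul, ← smul_eq_mul, ← LinearMap.smul_apply, ← hf.2 i, dualMatrix_apply_apply,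
    hw.2 i, map_smul]

namespace IsGLBimodule

variable [CharZero K]

theorem eq_zero_of_apply_eq_zero (h : IsGLBimodule E F lam mu w) {f : Dual K W}
    (hE : ∀ i j, i < j → dualMatrix E i j f = 0) (hF : ∀ i j, i < j → dualMatrix F i j f = 0)
    (hfw : f w = 0) : f = 0 := by
  have hP := h.isSimpleGLModule
  have hQ : IsSimpleGLModule F ∅ (⊤ ⊓ highestWeightSpace E lam) :=
    ⟨h.isGLAction_right, by simp, by simpa using hP.inf_highestWeightSpace lam⟩
  have hw : w ∈ ⊤ ⊓ highestWeightSpace E lam ⊓ highestWeightSpace F mu :=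
    ⟨⟨trivial, h.mem_left⟩, h.mem_right⟩
  refine LinearMap.ker_eq_top.1 (top_le_iff.1 (hP.le_of_forall_lowering
    h.highestWeightSpace_ne_bot (hQ.le_of_forall_lowering
      ((Submodule.ne_bot_iff _).2 ⟨w, hw, h.ne_zero⟩) ?_ fun i j hji x _ => ?_)
    fun i j hji x _ => ?_))
  · rw [← (hQ.inf_highestWeightSpace mu).span_singleton_eq hw h.ne_zero]
    simpa using hfw
  · exact LinearMap.congr_fun (hF j i hji) x
  · exact LinearMap.congr_fun (hE j i hji) x

theorem exists_dual [IsAlgClosed K] [FiniteDimensional K W] (h : IsGLBimodule E F lam mu w) :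
    ∃ f : Dual K W, f w ≠ 0 ∧ IsGLBimodule (dualMatrix E) (dualMatrix F) lam mu f := by
  have hcomm i j k l : Commute (dualMatrix E i j) (dualMatrix F k l) :=
    LinearMap.ext fun f => LinearMap.ext fun x => by
      simpa only [End.mul_apply, dualMatrix_apply_apply] using
        congrArg f (LinearMap.congr_fun (h.commute j i l k).eq.symm x)
  have : Nontrivial W := ⟨w, 0, h.ne_zero⟩
  obtain ⟨r, hr⟩ := exists_inf_highestWeightSpace_ne_bot h.isGLAction_left.dualMatrix
    (top_ne_bot (α := Submodule K (Dual K W))) (isStable_top _)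
  obtain ⟨s, hs⟩ := exists_inf_highestWeightSpace_ne_bot h.isGLAction_right.dualMatrix hr
    ((isStable_top _).inf (isStable_highestWeightSpace
      (by rintro _ ⟨k, l, rfl⟩ i j; exact (hcomm i j k l).symm) r))
  obtain ⟨f, ⟨⟨-, hfE⟩, hfF⟩, hf0⟩ := Submodule.exists_mem_ne_zero_of_ne_bot hs
  have hfw : f w ≠ 0 := fun hfw => hf0 <| h.eq_zero_of_apply_eq_zero
    (mem_highestWeightSpace.1 hfE).1 (mem_highestWeightSpace.1 hfF).1 hfw
  refine ⟨f, hfw, h.isGLAction_left.dualMatrix, h.isGLAction_right.dualMatrix, hcomm, ?_, hf0,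
    eq_weight_of_mem_dual hfE h.mem_left hfw ▸ hfE, eq_weight_of_mem_dual hfF h.mem_right hfw ▸ hfF⟩
  simpa only [entries_dualMatrix, ← Set.image_union] using h.isSimple.dual

end IsGLBimodule

end Duality

section Reversal

variable {K W : Type*} [Field K] [AddCommGroup W] [Module K W] {n : ℕ}

/-- The action of `gl_n` twisted by the automorphism `E_{ij} ↦ -E_{n+1-j,n+1-i}`, which preserves
the upper triangular matrices. -/
def reverse {A : Type*} [Neg A] (E : Matrix (Fin n) (Fin n) A) : Matrix (Fin n) (Fin n) A :=
  (-Eᵀ).submatrix Fin.rev Fin.rev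

theorem reverse_apply {A : Type*} [Neg A] (E : Matrix (Fin n) (Fin n) A) (i j : Fin n) :
    reverse E i j = -E j.rev i.rev :=
  rfl

theorem IsGLTensor.reverse {A : Type*} [Ring A] {D X : Matrix (Fin n) (Fin n) A}
    (hX : IsGLTensor D X) : IsGLTensor (reverse D) (reverse X) :=
  hX.neg_transpose.submatrix Fin.rev_injective

variable {E F : Matrix (Fin n) (Fin n) (End K W)}

theorem isStable_entries_reverse {N : Submodule K W} :
    IsStable (entries (reverse E)) N ↔ IsStable (entries E) N := by
  simp only [isStable_entries, End.mem_invtSubmodule, SetLike.le_def, Submodule.mem_comap,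
    reverse_apply, LinearMap.neg_apply, neg_mem_iff]
  exact ⟨fun h i j => by simpa using h j.rev i.rev, fun h i j => h j.rev i.rev⟩

theorem reverse_add : reverse (E + F) = reverse E + reverse F := by
  ext i j : 2
  simp [reverse_apply, add_comm]

theorem reverse_mul_reverse (hEF : ∀ i j k l, Commute (E i j) (F k l)) :
    reverse F * reverse E = -reverse (E * F) := by
  ext1 i j
  rw [Matrix.neg_apply, reverse_apply, neg_neg, Matrix.mul_apply, Matrix.mul_apply,
    ← Equiv.sum_comp Fin.revPerm]
  refine Finset.sum_congr rfl fun a _ => ?_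
  rw [reverse_apply, reverse_apply, neg_mul_neg, Fin.revPerm_apply, Fin.rev_rev]
  exact (hEF _ _ _ _).eq.symm

theorem isStable_entries_neg {N : Submodule K W} :
    IsStable (entries (-E)) N ↔ IsStable (entries E) N := by
  simp [isStable_entries, End.mem_invtSubmodule, SetLike.le_def]

theorem isStable_yangianOperators_reverse (hEF : ∀ i j k l, Commute (E i j) (F k l))
    {N : Submodule K W} (hs : IsStable (yangianOperators E F) N) :
    IsStable (yangianOperators (reverse F) (reverse E)) N := by
  rw [yangianOperators, ← reverse_add, reverse_mul_reverse hEF, add_comm F E, isStable_union,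
    isStable_entries_neg, isStable_entries_reverse, isStable_entries_reverse]
  exact isStable_union.1 hs

theorem mem_highestWeightSpace_reverse {r : Fin n → K} {x : W} (hx : x ∈ highestWeightSpace E r) :
    x ∈ highestWeightSpace (reverse E) (-(r ∘ Fin.rev)) := by
  rw [mem_highestWeightSpace] at hx ⊢
  refine ⟨fun i j hij => ?_, fun i => ?_⟩
  · rw [reverse_apply, LinearMap.neg_apply, hx.1 _ _ (Fin.rev_lt_rev.2 hij), neg_zero]
  · rw [reverse_apply, LinearMap.neg_apply, hx.2 i.rev, Pi.neg_apply, Function.comp_apply, neg_smul]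

theorem IsGLBimodule.reverse {lam mu : Fin n → K} {w : W} (h : IsGLBimodule E F lam mu w) :
    IsGLBimodule (reverse E) (reverse F) (-(lam ∘ Fin.rev)) (-(mu ∘ Fin.rev)) w where
  isGLAction_left := h.isGLAction_left.reverse
  isGLAction_right := h.isGLAction_right.reverse
  commute _ _ _ _ := ((h.commute _ _ _ _).neg_left).neg_right
  isSimple := by
    refine ⟨isStable_top _, fun N hN hs => h.isSimple.eq_bot_or_eq N hN ?_⟩
    rwa [isStable_union, isStable_entries_reverse, isStable_entries_reverse, ← isStable_union] at hs
  ne_zero := h.ne_zero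
  mem_left := mem_highestWeightSpace_reverse h.mem_left
  mem_right := mem_highestWeightSpace_reverse h.mem_right

end Reversal

section Separation

variable {n : ℕ}

theorem bracketC_self (l : Fin n → ℂ) (i : Fin n) : bracketC n l i i = ∅ := by
  refine Set.eq_empty_of_forall_notMem ?_
  rintro x ⟨⟨s, hs⟩, ⟨t, ht⟩, hx⟩
  have hst : ((s + t : ℕ) : ℂ) = 0 := by
    push_cast
    linear_combination -hs - ht
  obtain ⟨rfl, -⟩ := Nat.add_eq_zero_iff.1 (Nat.cast_eq_zero.1 hst)
  exact hx i le_rfl le_rfl (by simpa using hs)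

theorem sepCond_self (lam mu : Fin n → ℂ) (i : Fin n) : SepCond n lam mu i i := by
  simp [SepCond, bracketC_self]

theorem bracketC_castSucc (l : Fin (n + 1) → ℂ) (i j : Fin n) :
    bracketC (n + 1) l i.castSucc j.castSucc = bracketC n (l ∘ Fin.castSucc) i j := by
  ext x
  simp [bracketC, Fin.forall_fin_succ', (Fin.castSucc_lt_last j).not_ge]

theorem sepCond_comp_castSucc {lam mu : Fin (n + 1) → ℂ} {i j : Fin n}
    (h : SepCond (n + 1) lam mu i.castSucc j.castSucc) :
    SepCond n (lam ∘ Fin.castSucc) (mu ∘ Fin.castSucc) i j := by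
  rwa [SepCond, bracketC_castSucc, bracketC_castSucc] at h

theorem mem_bracketC_rev {l : Fin n → ℂ} {d x : ℂ} {i j : Fin n} :
    x ∈ bracketC n (fun s => d - l s.rev) i j ↔ d - x ∈ bracketC n l j.rev i.rev := by
  simp only [bracketC, Set.mem_ofPred_eq]
  rw [← and_assoc, ← and_assoc, and_comm (a := ∃ t : ℕ, x = _)]
  refine and_congr (and_congr (exists_congr fun t => ?_) (exists_congr fun t => ?_)) ?_
  · constructor <;> intro h <;> linear_combination h
  · constructor <;> intro h <;> linear_combination h
  · rw [Fin.rev_surjective.forall]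
    refine forall_congr' fun s => ?_
    rw [Fin.rev_rev, Fin.le_rev_iff, Fin.rev_le_iff]
    exact ⟨fun h hj hi hx => h hi hj (by linear_combination -hx),
      fun h hi hj hx => h hj hi (by linear_combination -hx)⟩

theorem lshiftC_neg_rev (lam : Fin n → ℂ) :
    lshiftC n (-(lam ∘ Fin.rev)) = fun i => (1 - n) - lshiftC n lam i.rev := by
  funext i
  have hi : ((i.rev : ℕ) : ℂ) = n - 1 - (i : ℕ) := by
    rw [Fin.val_rev, Nat.cast_sub (by lia)]
    push_cast
    ring
  simp only [lshiftC, hi, Pi.neg_apply, Function.comp_apply]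
  ring

theorem lshiftC_mem_bracketC_neg_rev {lam mu : Fin n → ℂ} {i j k : Fin n} :
    lshiftC n (-(mu ∘ Fin.rev)) k ∈ bracketC n (lshiftC n (-(lam ∘ Fin.rev))) i j ↔
      lshiftC n mu k.rev ∈ bracketC n (lshiftC n lam) j.rev i.rev := by
  rw [lshiftC_neg_rev lam, mem_bracketC_rev, lshiftC_neg_rev, sub_sub_cancel]

theorem sepCond_neg_rev {lam mu : Fin n → ℂ} {i j : Fin n} (h : SepCond n lam mu j.rev i.rev) :
    SepCond n (-(lam ∘ Fin.rev)) (-(mu ∘ Fin.rev)) i j := by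
  simpa only [SepCond, lshiftC_mem_bracketC_neg_rev, and_comm] using h

end Separation

section Criterion

universe u

/-- The separation condition implies irreducibility over `Y(gl_n)`. All bimodules are quantified
over, since the induction passes to subspaces, duals and reversals of a tensor product. -/
def SeparationCriterion (n : ℕ) : Prop :=
  ∀ (W : Type u) [AddCommGroup W] [Module ℂ W] [FiniteDimensional ℂ W]
    (E F : Matrix (Fin n) (Fin n) (End ℂ W)) (lam mu : Fin n → ℂ) (w : W),
    IsGLBimodule E F lam mu w → (∀ i j, i < j → SepCond n lam mu i j) →
      IsSimpleUnder (yangianOperators E F) ⊤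

variable {W : Type u} [AddCommGroup W] [Module ℂ W] [FiniteDimensional ℂ W] {n : ℕ}
  {E F : Matrix (Fin (n + 1)) (Fin (n + 1)) (End ℂ W)} {lam mu : Fin (n + 1) → ℂ} {w : W}
  {U : Submodule ℂ W}

namespace SeparationCriterion

theorem mem_of_isStable (ih : SeparationCriterion.{u} n) (h : IsGLBimodule E F lam mu w)
    (hsep : ∀ i j, i < j → SepCond (n + 1) lam mu i j)
    (hb : lshiftC (n + 1) mu (Fin.last n) ∉ bracketC (n + 1) (lshiftC (n + 1) lam) 0 (Fin.last n))
    (hU : U ≠ ⊥) (hs : IsStable (yangianOperators E F) U) : w ∈ U := by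
  obtain ⟨hE, hF⟩ := isStable_union.1 (h.isSimpleUnder_inf_bottomLayers
    (lam (Fin.last n)) (mu (Fin.last n))).isStable
  have hsimple := ih _ _ _ _ _ _ (h.restrict hE hF) fun i j hij =>
    sepCond_comp_castSucc (hsep _ _ (Fin.castSucc_lt_castSucc_iff.2 hij))
  obtain hbot | htop :=
    hsimple.eq_bot_or_eq _ le_top (hs.comap_subtype_bottomLayers h.commute hE hF)
  · obtain ⟨x, ⟨hxU, hx⟩, hx0⟩ :=
      Submodule.exists_mem_ne_zero_of_ne_bot (h.inf_bottomLayers_ne_bot hb hU hs)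
    exact absurd (congrArg Subtype.val ((Submodule.eq_bot_iff _).1 hbot ⟨x, hx⟩ hxU)) hx0
  · exact Submodule.comap_subtype_eq_top.1 htop h.mem_bottomLayers

theorem eq_bot_or_eq_top (ih : SeparationCriterion.{u} n) (h : IsGLBimodule E F lam mu w)
    (hsep : ∀ i j, i < j → SepCond (n + 1) lam mu i j)
    (hlast : lshiftC (n + 1) mu (Fin.last n) ∉
      bracketC (n + 1) (lshiftC (n + 1) lam) 0 (Fin.last n))
    (hzero : lshiftC (n + 1) mu 0 ∉ bracketC (n + 1) (lshiftC (n + 1) lam) 0 (Fin.last n))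
    (hs : IsStable (yangianOperators E F) U) : U = ⊥ ∨ U = ⊤ := by
  by_contra! hU
  obtain ⟨f, hfw, hf⟩ := h.exists_dual
  have hann : U.dualAnnihilator ≠ ⊥ := fun h0 =>
    hU.2 (Subspace.dualAnnihilator_inj.1 (h0.trans Submodule.dualAnnihilator_top.symm))
  have hmem : f ∈ U.dualAnnihilator :=
    ih.mem_of_isStable hf.reverse (fun i j hij => sepCond_neg_rev (hsep _ _ (Fin.rev_lt_rev.2 hij)))
      (by simpa [lshiftC_mem_bracketC_neg_rev] using hzero) hann
      (isStable_yangianOperators_reverse hf.swap.commute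
        (yangianOperators_dualMatrix E F ▸ hs.dualAnnihilator))
  exact hfw ((Submodule.mem_dualAnnihilator f).1 hmem w (ih.mem_of_isStable h hsep hlast hU.1 hs))

theorem succ (ih : SeparationCriterion.{u} n) : SeparationCriterion.{u} (n + 1) := by
  intro W _ _ _ E F lam mu w h hsep
  refine ⟨isStable_top _, fun U _ hs => ?_⟩
  have hends : SepCond (n + 1) lam mu 0 (Fin.last n) := by
    obtain heq | hlt := (Fin.zero_le (Fin.last n)).eq_or_lt
    · exact heq ▸ sepCond_self lam mu 0
    · exact hsep _ _ hlt
  obtain ⟨hlast, hzero⟩ | ⟨hlast, hzero⟩ := hends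
  · exact ih.eq_bot_or_eq_top h hsep hlast hzero hs
  · refine ih.eq_bot_or_eq_top h.reverse.swap
      (fun i j hij => (sepCond_neg_rev (hsep _ _ (Fin.rev_lt_rev.2 hij))).symm) ?_ ?_
      (isStable_yangianOperators_reverse h.commute hs)
    · simpa [lshiftC_mem_bracketC_neg_rev] using hzero
    · simpa [lshiftC_mem_bracketC_neg_rev] using hlast

end SeparationCriterion

theorem separationCriterion (n : ℕ) : SeparationCriterion.{u} n := by
  induction n with
  | zero =>
    refine fun W _ _ _ E F lam mu w h _ => ⟨isStable_top _, fun U hU _ => ?_⟩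
    refine h.isSimple.eq_bot_or_eq U hU (isStable_union.2 ⟨?_, ?_⟩) <;>
      exact isStable_entries.2 fun i => i.elim0
  | succ n ih => exact ih.succ

end Criterion

section TensorProduct

variable {K V V' : Type*} [Field K] [AddCommGroup V] [Module K V] [AddCommGroup V'] [Module K V']

theorem exists_eq_tmul_of_rTensor {n : ℕ} {E : Matrix (Fin n) (Fin n) (End K V)} {r : Fin n → K}
    {v : V} (hv : highestWeightSpace E r ≤ K ∙ v) {x : V ⊗[K] V'}
    (hx : x ∈ highestWeightSpace (E.map (LinearMap.rTensor V')) r) : ∃ y : V', x = v ⊗ₜ y := by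
  obtain ⟨c, rfl⟩ := TensorProduct.eq_repr_basis_right (Basis.ofVectorSpace K V') x
  have hcoeff (f : End K V)
      (hf : f.rTensor V' (c.sum fun i m => m ⊗ₜ Basis.ofVectorSpace K V' i) = 0) i :
      f (c i) = 0 := by
    rw [map_finsuppSum] at hf
    have h := TensorProduct.sum_tmul_basis_right_eq_zero (Basis.ofVectorSpace K V')
      (c.mapRange f (map_zero f)) (by simpa [Finsupp.sum_mapRange_index] using hf)
    simpa using DFunLike.congr_fun h i
  rw [mem_highestWeightSpace] at hx
  have hc i : ∃ a : K, a • v = c i := by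
    refine Submodule.mem_span_singleton.1 (hv (mem_highestWeightSpace.2
      ⟨fun k l hkl => hcoeff _ (hx.1 k l hkl) i, fun k => sub_eq_zero.1 ?_⟩))
    refine hcoeff (E k k - r k • LinearMap.id) ?_ i
    rw [LinearMap.rTensor_sub, LinearMap.rTensor_smul, LinearMap.rTensor_id]
    exact sub_eq_zero.2 (hx.2 k)
  choose a ha using hc
  refine ⟨c.sum fun i _ => a i • Basis.ofVectorSpace K V' i, ?_⟩
  simp only [Finsupp.sum, TensorProduct.tmul_sum, ← ha, TensorProduct.smul_tmul]

theorem tmul_ne_zero {v : V} {v' : V'} (hv : v ≠ 0) (hv' : v' ≠ 0) : v ⊗ₜ[K] v' ≠ 0 :=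
  ((linearIndependent_unique_iff (v := fun _ : Unit => v)).2 hv).tmul_of_isDomain
    ((linearIndependent_unique_iff (v := fun _ : Unit => v')).2 hv') |>.ne_zero ((), ())

variable {n : ℕ} {E : Matrix (Fin n) (Fin n) (End K V)} {F : Matrix (Fin n) (Fin n) (End K V')}
  {lam mu r : Fin n → K} {v : V} {v' : V'}

theorem IsSimpleGLModule.highestWeightSpace_le_span [CharZero K]
    (hE : IsSimpleGLModule E ∅ ⊤) (hv : v ∈ highestWeightSpace E lam) (hv0 : v ≠ 0)
    (r : Fin n → K) : highestWeightSpace E r ≤ K ∙ v := by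
  intro x hx
  obtain rfl | hx0 := eq_or_ne x 0
  · exact zero_mem _
  obtain rfl := hE.highestWeight_unique ((Submodule.ne_bot_iff _).2 ⟨x, ⟨trivial, hx⟩, hx0⟩)
    ((Submodule.ne_bot_iff _).2 ⟨v, ⟨trivial, hv⟩, hv0⟩)
  rw [(hE.inf_highestWeightSpace r).span_singleton_eq ⟨trivial, hv⟩ hv0]
  exact ⟨trivial, hx⟩

theorem isSimpleUnder_tensorProduct [IsAlgClosed K] [CharZero K] [FiniteDimensional K V]
    [FiniteDimensional K V'] {T : Set (End K V')} (hE : IsSimpleGLModule E ∅ ⊤)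
    (hT : IsSimpleUnder T ⊤) (hv : v ∈ highestWeightSpace E lam) (hv0 : v ≠ 0) :
    IsSimpleUnder (entries (E.map (LinearMap.rTensor V')) ∪ LinearMap.lTensor V '' T) ⊤ := by
  refine ⟨isStable_top _, fun N _ hN => or_iff_not_imp_left.2 fun hN0 => ?_⟩
  obtain ⟨hNE, hNT⟩ := isStable_union.1 hN
  obtain ⟨r, hr⟩ := exists_inf_highestWeightSpace_ne_bot
    (hE.isGLAction.map (End.rTensorAlgHom K V V').toRingHom) hN0 hNE
  obtain ⟨x, ⟨hxN, hx⟩, hx0⟩ := Submodule.exists_mem_ne_zero_of_ne_bot hr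
  obtain ⟨y, rfl⟩ := exists_eq_tmul_of_rTensor (hE.highestWeightSpace_le_span hv hv0 r) hx
  have hright : N.comap (TensorProduct.mk K V V' v) = ⊤ :=
    hT.eq_top_of_mem (fun g hg b hb => hNT _ ⟨g, hg, rfl⟩ hb) hxN
      (by rintro rfl; simp at hx0)
  have hleft (b : V') : N.comap ((TensorProduct.mk K V V').flip b) = ⊤ :=
    hE.isSimple.eq_top_of_mem
      (isStable_union.2 ⟨isStable_entries.2 fun i j a ha => isStable_entries.1 hNE i j ha,
        fun _ hg => hg.elim⟩) (hright.ge (trivial : b ∈ ⊤)) hv0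
  rw [eq_top_iff, ← TensorProduct.span_tmul_eq_top, Submodule.span_le]
  rintro _ ⟨a, b, rfl⟩
  exact (hleft b).ge (trivial : a ∈ ⊤)

theorem IsGLBimodule.tensorProduct [IsAlgClosed K] [CharZero K] [FiniteDimensional K V]
    [FiniteDimensional K V'] (hE : IsSimpleGLModule E ∅ ⊤) (hF : IsSimpleGLModule F ∅ ⊤)
    (hv : v ∈ highestWeightSpace E lam) (hv0 : v ≠ 0) (hv' : v' ∈ highestWeightSpace F mu)
    (hv'0 : v' ≠ 0) :
    IsGLBimodule (E.map (LinearMap.rTensor V')) (F.map (LinearMap.lTensor V)) lam mu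
      (v ⊗ₜ[K] v') where
  isGLAction_left := hE.isGLAction.map (End.rTensorAlgHom K V V').toRingHom
  isGLAction_right := hF.isGLAction.map (End.lTensorAlgHom K V' V).toRingHom
  commute i j k l := by
    rw [commute_iff_eq, Matrix.map_apply, Matrix.map_apply, End.mul_eq_comp, End.mul_eq_comp,
      LinearMap.rTensor_comp_lTensor, LinearMap.lTensor_comp_rTensor]
  isSimple := by
    refine ⟨isStable_top _, fun N hN hs => (isSimpleUnder_tensorProduct hE hF.isSimple hv
      hv0).eq_bot_or_eq N hN (hs.mono (Set.union_subset_union_right _ ?_))⟩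
    rintro _ ⟨_, ⟨i, j, rfl⟩ | hg, rfl⟩
    · exact ⟨i, j, rfl⟩
    · exact hg.elim
  ne_zero := tmul_ne_zero hv0 hv'0
  mem_left := by
    rw [mem_highestWeightSpace] at hv ⊢
    simp +contextual [hv.1, hv.2, TensorProduct.smul_tmul']
  mem_right := by
    rw [mem_highestWeightSpace] at hv' ⊢
    simp +contextual [hv'.1, hv'.2]

end TensorProduct

section GLRep

variable {n : ℕ} {lam : Fin n → ℂ}

theorem isSimpleGLModule_glRep (A : GLRep n lam) :
    IsSimpleGLModule (Matrix.of A.E) ∅ ⊤ where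
  isGLAction := A.commRel
  commute _ hg := hg.elim
  isSimple := ⟨isStable_top _, fun N _ hN => A.irreducible N fun i j _ hx =>
    isStable_entries.1 (isStable_union.1 hN).1 i j hx⟩

theorem hv_mem_highestWeightSpace (A : GLRep n lam) :
    A.hv ∈ highestWeightSpace (Matrix.of A.E) lam :=
  mem_highestWeightSpace.2 ⟨A.hv_upper, A.hv_diag⟩

end GLRep

end EvalYangian

open EvalYangian

/-- If for each pair of indices `i < j` the separation condition
holds, then the `Y(gl_n)`-module `L(λ) ⊗ L(μ)` is irreducible. -/
theorem tensorEval_irreducible_of_sepCond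
    (n : ℕ) (lam mu : Fin n → ℂ)
    (hlam : IsGLHighestWeight n lam) (hmu : IsGLHighestWeight n mu)
    (hsep : ∀ i j : Fin n, i < j → SepCond n lam mu i j)
    (A : GLRep n lam) (B : GLRep n mu) :
    YangianIrred2 A B := by
  intro U h1 h2
  have hbimodule := IsGLBimodule.tensorProduct (isSimpleGLModule_glRep A)
    (isSimpleGLModule_glRep B) (hv_mem_highestWeightSpace A) A.hv_ne (hv_mem_highestWeightSpace B)
    B.hv_ne
  refine (separationCriterion n _ _ _ lam mu _ hbimodule hsep).eq_bot_or_eq U le_top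
    (isStable_union.2 ⟨isStable_entries.2 h1, isStable_entries.2 fun i j x hx => ?_⟩)
  have ht2 : (((Matrix.of A.E).map (LinearMap.rTensor B.V)) *
      (Matrix.of B.E).map (LinearMap.lTensor A.V)) i j = t2 A B i j := by
    simp only [t2, Matrix.mul_apply, Matrix.map_apply, Matrix.of_apply, Module.End.mul_eq_comp,
      LinearMap.rTensor_comp_lTensor]
  rw [Submodule.mem_comap, ht2]
  exact h2 i j x hx
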